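/- Let n ∈ ℕ, n ≥ 2, ℓ ∈ ℕ₀, and c ∈ ℝ. The operator τ_{2,n,ℓ}(c) with domain C₀^∞((0,∞)) is essentially self-adjoint in L²((0,∞); dr) if and only if c ≥ γ_{2,n,ℓ}. -/

import Mathlib

open MeasureTheory

noncomputable section

/-- A densely defined operator `T` in a complex Hilbert space is *essentially self-adjoint*
if its adjoint `T*` is self-adjoint (equivalently, its closure is self-adjoint). -/
def EssentiallySelfAdjoint {H : Type*} [NormedAddCommGroup H] [InnerProductSpace ℂ H]
    [CompleteSpace H] (T : H →ₗ.[ℂ] H) : Prop :=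
  Dense (T.domain : Set H) ∧ IsSelfAdjoint T.adjoint

/-- Lebesgue measure on `(0,∞)`. -/
def lebIoi : Measure ℝ := volume.restrict (Set.Ioi 0)

/-- The graph of the operator given by a formal differential expression `L` with domain
`C₀^∞((0,∞))`, as a subspace of `L²((0,∞); dr) × L²((0,∞); dr)`. -/
def graphOnHalfLine (L : (ℝ → ℂ) → (ℝ → ℂ)) : Submodule ℂ (Lp ℂ 2 lebIoi × Lp ℂ 2 lebIoi) :=
  Submodule.span ℂ {p | ∃ φ : ℝ → ℂ, ContDiff ℝ (⊤ : ℕ∞) φ ∧ HasCompactSupport φ ∧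
    tsupport φ ⊆ Set.Ioi 0 ∧
    (p.1 : ℝ → ℂ) =ᵐ[lebIoi] φ ∧ (p.2 : ℝ → ℂ) =ᵐ[lebIoi] L φ}

/-- The operator in `L²((0,∞); dr)` given by a formal differential expression `L`
with domain `C₀^∞((0,∞))`. -/
def opOnHalfLine (L : (ℝ → ℂ) → (ℝ → ℂ)) : Lp ℂ 2 lebIoi →ₗ.[ℂ] Lp ℂ 2 lebIoi :=
  (graphOnHalfLine L).toLinearPMap


/-- The differential expression `d²/dr² - (n+2ℓ-1)(n+2ℓ-3)/(4r²)`. -/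
def bExp (n ℓ : ℕ) (φ : ℝ → ℂ) : ℝ → ℂ := fun r =>
  deriv (deriv φ) r
    - (((((n : ℝ) + 2 * ℓ - 1) * ((n : ℝ) + 2 * ℓ - 3)) / (4 * r ^ 2) : ℝ) : ℂ) * φ r

/-- The differential expression `τ_{2,n,ℓ}(c) = [d²/dr² - (n+2ℓ-1)(n+2ℓ-3)/(4r²)]² + c/r⁴`. -/
def tau2nlExp (n ℓ : ℕ) (c : ℝ) (φ : ℝ → ℂ) : ℝ → ℂ := fun r =>
  bExp n ℓ (bExp n ℓ φ) r + ((c / r ^ 4 : ℝ) : ℂ) * φ r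

/-- The operator `τ_{2,n,ℓ}(c)|_{C₀^∞((0,∞))}` in `L²((0,∞); dr)`. -/
def tau2nlOp (n ℓ : ℕ) (c : ℝ) : Lp ℂ 2 lebIoi →ₗ.[ℂ] Lp ℂ 2 lebIoi :=
  opOnHalfLine (tau2nlExp n ℓ c)

/-- The constant `γ_{2,n,ℓ}`. -/
def gamma2 (n ℓ : ℕ) : ℝ :=
  if ((n : ℝ) + 2 * ℓ - 1) * ((n : ℝ) + 2 * ℓ - 3) ≤ 11 then
    -3 * ((n : ℝ) + 2 * ℓ + 2) * ((n : ℝ) + 2 * ℓ - 6)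
  else
    -(((n : ℝ) + 2 * ℓ + 4) * ((n : ℝ) + 2 * ℓ) * ((n : ℝ) + 2 * ℓ - 4) *
      ((n : ℝ) + 2 * ℓ - 8)) / 16

/-!
The substitution `r = exp t`, `φ r = r ^ (3 / 2) * w (log r)` turns `τ` into
`exp (-4 t) (∂⁴ - a ∂² + K)` in `L²(exp (4 t) dt)`, and the maximal operator into the weak solutions
`W` of `(∂⁴ - a ∂² + K) W = F` with `W ∈ L²(exp (4 t) dt)` and `F ∈ L²(exp (-4 t) dt)`. The minimal
operator is essentially self-adjoint if and only if the maximal operator is symmetric, that is, if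
and only if the boundary form of Lagrange's identity vanishes at `-∞` on such solutions. If all
roots `q` of `q⁴ - a q² + K` satisfy `2 ≤ |Re q|`, a mollified solution, which is
`o(exp (-2 t))` and is mapped to `o(exp (2 t))`, is itself `O(exp t)` at `-∞`, and the boundary form
vanishes. If `|Re q| < 2` for some root, two exponential polynomials solving the homogeneous
equation, cut off near `+∞`, have non-zero boundary form.
-/

namespace EulerOperator

open Set Filter Topology Asymptotics
open ContinuousLinearMap (mul)
open scoped ENNReal Convolution ContDiff ComplexConjugate

/-- The constant coefficient expression `∂⁴ - a ∂² + K`, into which the substitution `r = exp t`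
turns a fourth order Euler expression. -/
def quarticOp (a K : ℝ) (u : ℝ → ℂ) (t : ℝ) : ℂ :=
  iteratedDeriv 4 u t - a * iteratedDeriv 2 u t + K * u t

/-- The boundary form in Lagrange's identity for `quarticOp a K`. -/
def lagrangeBracket (a : ℝ) (u v : ℝ → ℂ) (t : ℝ) : ℂ :=
  iteratedDeriv 3 u t * v t - iteratedDeriv 2 u t * deriv v t + deriv u t * iteratedDeriv 2 v t
    - u t * iteratedDeriv 3 v t - a * (deriv u t * v t - u t * deriv v t)

section Lagrange

variable {a K : ℝ} {u v : ℝ → ℂ}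

lemma hasDerivAt_iteratedDeriv (hu : ContDiff ℝ ∞ u) (k : ℕ) (t : ℝ) :
    HasDerivAt (iteratedDeriv k u) (iteratedDeriv (k + 1) u t) t := by
  rw [iteratedDeriv_succ]
  exact ((hu.differentiable_iteratedDeriv k (mod_cast WithTop.coe_lt_top _)) t).hasDerivAt

lemma contDiff_iteratedDeriv (hu : ContDiff ℝ ∞ u) (k : ℕ) : ContDiff ℝ ∞ (iteratedDeriv k u) := by
  rw [iteratedDeriv_eq_iterate]
  exact hu.iterate_deriv k

lemma hasCompactSupport_iteratedDeriv (hu : HasCompactSupport u) (k : ℕ) :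
    HasCompactSupport (iteratedDeriv k u) := by
  induction k with
  | zero => simpa using hu
  | succ k ih =>
    rw [iteratedDeriv_succ]
    exact ih.deriv

lemma iteratedDeriv_sub_const_mul (hu : ContDiff ℝ ∞ u) (hv : ContDiff ℝ ∞ v) (k : ℕ) (q : ℂ)
    (t : ℝ) : iteratedDeriv k (fun t => u t - q * v t) t =
      iteratedDeriv k u t - q * iteratedDeriv k v t := by
  rw [iteratedDeriv_fun_sub (hu.contDiffAt.of_le (mod_cast le_top))
    ((contDiff_const.mul hv).contDiffAt.of_le (mod_cast le_top)), iteratedDeriv_const_mul_field]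

lemma continuous_quarticOp (hu : ContDiff ℝ ∞ u) : Continuous (quarticOp a K u) := by
  have h₄ := (contDiff_iteratedDeriv hu 4).continuous
  have h₂ := (contDiff_iteratedDeriv hu 2).continuous
  have h₀ := hu.continuous
  unfold quarticOp
  fun_prop

lemma hasCompactSupport_quarticOp (hu : HasCompactSupport u) :
    HasCompactSupport (quarticOp a K u) :=
  ((hasCompactSupport_iteratedDeriv hu 4).sub (hasCompactSupport_iteratedDeriv hu 2).mul_left).add
    hu.mul_left

lemma quarticOp_star (u : ℝ → ℂ) : quarticOp a K (star u) = star (quarticOp a K u) := by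
  have h (k : ℕ) : iteratedDeriv k (star u) = star (iteratedDeriv k u) := by
    induction k with
    | zero => simp
    | succ k ih => rw [iteratedDeriv_succ, iteratedDeriv_succ, ih]; exact funext fun t => deriv.star
  funext t
  simp [quarticOp, h]

lemma quarticOp_comp_const_sub (u : ℝ → ℂ) (x t : ℝ) :
    quarticOp a K (fun s => u (x - s)) t = quarticOp a K u (x - t) := by
  norm_num [quarticOp, iteratedDeriv_comp_const_sub]

lemma hasDerivAt_lagrangeBracket (hu : ContDiff ℝ ∞ u) (hv : ContDiff ℝ ∞ v) (t : ℝ) :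
    HasDerivAt (lagrangeBracket a u v) (quarticOp a K u t * v t - u t * quarticOp a K v t) t := by
  have du := fun k => hasDerivAt_iteratedDeriv hu k t
  have dv := fun k => hasDerivAt_iteratedDeriv hv k t
  have h := (((((du 3).mul (dv 0)).sub ((du 2).mul (dv 1))).add ((du 1).mul (dv 2))).sub
    ((du 0).mul (dv 3))).sub ((((du 1).mul (dv 0)).sub ((du 0).mul (dv 1))).const_mul (a : ℂ))
  simp only [iteratedDeriv_one, iteratedDeriv_zero] at h
  refine h.congr_deriv ?_
  simp only [quarticOp, zero_add, Nat.reduceAdd, iteratedDeriv_one]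
  ring

lemma integral_quarticOp_mul_eq (hu : ContDiff ℝ ∞ u) (hv : ContDiff ℝ ∞ v)
    (i₁ : Integrable fun t => quarticOp a K u t * v t)
    (i₂ : Integrable fun t => u t * quarticOp a K v t)
    (hbot : Tendsto (lagrangeBracket a u v) atBot (𝓝 0))
    (htop : Tendsto (lagrangeBracket a u v) atTop (𝓝 0)) :
    ∫ t, quarticOp a K u t * v t = ∫ t, u t * quarticOp a K v t := by
  rw [← sub_eq_zero, ← integral_sub i₁ i₂, ← sub_zero (0 : ℂ)]
  exact integral_of_hasDerivAt_of_tendsto (fun t => hasDerivAt_lagrangeBracket hu hv t)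
    (i₁.sub i₂) hbot htop

lemma tendsto_lagrangeBracket {l : Filter ℝ}
    (h : ∀ j k, Tendsto (fun t => iteratedDeriv j u t * iteratedDeriv k v t) l (𝓝 0)) :
    Tendsto (lagrangeBracket a u v) l (𝓝 0) := by
  have h' := ((((h 3 0).sub (h 2 1)).add (h 1 2)).sub (h 0 3)).sub
    (((h 1 0).sub (h 0 1)).const_mul (a : ℂ))
  simp only [iteratedDeriv_one, iteratedDeriv_zero, mul_zero, sub_zero, add_zero] at h'
  exact h'

lemma integral_quarticOp_mul_eq_of_hasCompactSupport (hu : ContDiff ℝ ∞ u)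
    (hc : HasCompactSupport u) (hv : ContDiff ℝ ∞ v) :
    ∫ t, quarticOp a K u t * v t = ∫ t, u t * quarticOp a K v t := by
  have hb {l : Filter ℝ} (hl : l ≤ cocompact ℝ) : Tendsto (lagrangeBracket a u v) l (𝓝 0) := by
    refine tendsto_lagrangeBracket fun j k => tendsto_const_nhds.congr' ?_
    filter_upwards [hl (hasCompactSupport_iteratedDeriv hc j).compl_mem_cocompact] with t ht
    rw [image_eq_zero_of_notMem_tsupport ht, zero_mul]
  exact integral_quarticOp_mul_eq hu hv
    (((continuous_quarticOp hu).mul hv.continuous).integrable_of_hasCompactSupport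
      (hasCompactSupport_quarticOp hc).mul_right)
    ((hu.continuous.mul (continuous_quarticOp hv)).integrable_of_hasCompactSupport hc.mul_right)
    (hb atBot_le_cocompact) (hb atTop_le_cocompact)

end Lagrange

section Decay

variable {q : ℂ} {β : ℝ} {g w : ℝ → ℂ}

lemma hasDerivAt_cexp_mul (q : ℂ) (t : ℝ) :
    HasDerivAt (fun t : ℝ => Complex.exp (q * t)) (q * Complex.exp (q * t)) t := by
  have h : HasDerivAt (fun t : ℝ => q * (t : ℂ)) q t := by
    simpa using (Complex.ofRealCLM.hasDerivAt (x := t)).const_mul q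
  simpa only [mul_comm] using h.cexp

lemma norm_cexp_mul (q : ℂ) (t : ℝ) : ‖Complex.exp (q * t)‖ = Real.exp (q.re * t) := by
  simp [Complex.norm_exp]

lemma exists_norm_cexp_neg_mul_sub_le (hβ : q.re ≠ β)
    (hg : ∀ t, HasDerivAt g (q * g t + w t) t) (hw : w =O[atBot] fun t => Real.exp (β * t)) :
    ∃ C T : ℝ, 0 ≤ C ∧ ∀ s t, s ≤ t → t ≤ T →
      ‖Complex.exp (-q * t) * g t - Complex.exp (-q * s) * g s‖ ≤
        C / (β - q.re) * (Real.exp ((β - q.re) * t) - Real.exp ((β - q.re) * s)) := by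
  obtain ⟨C, hC0, hC⟩ := hw.exists_nonneg
  obtain ⟨T, hT⟩ := eventually_atBot.1 hC.bound
  refine ⟨C, T, hC0, fun s t hst htT => ?_⟩
  have hδ : β - q.re ≠ 0 := sub_ne_zero.2 hβ.symm
  have hF (x : ℝ) : HasDerivAt (fun x : ℝ => Complex.exp (-q * x) * g x)
      (Complex.exp (-q * x) * w x) x :=
    ((hasDerivAt_cexp_mul (-q) x).mul (hg x)).congr_deriv (by ring)
  have hB (x : ℝ) : HasDerivAt (fun x => C / (β - q.re) * Real.exp ((β - q.re) * x))
      (C * Real.exp ((β - q.re) * x)) x := by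
    refine (((hasDerivAt_id x).const_mul (β - q.re)).exp.const_mul (C / (β - q.re))).congr_deriv ?_
    simp only [id]
    field_simp
  have hbound (x : ℝ) (hx : x ∈ Ico s t) :
      ‖Complex.exp (-q * x) * w x‖ ≤ C * Real.exp ((β - q.re) * x) := by
    have h := hT x (hx.2.le.trans htT)
    rw [Real.norm_of_nonneg (Real.exp_pos _).le] at h
    rw [norm_mul, norm_cexp_mul, sub_eq_neg_add, add_mul, Real.exp_add, mul_left_comm]
    exact mul_le_mul_of_nonneg_left h (Real.exp_pos _).le
  rw [mul_sub]
  exact image_norm_le_of_norm_deriv_right_le_deriv_boundary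
    (fun x _ => ((hF x).sub_const _).continuousAt.continuousWithinAt)
    (fun x _ => ((hF x).sub_const _).hasDerivWithinAt) (by simp)
    (fun x => (hB x).sub_const _) hbound ⟨hst, le_rfl⟩

lemma isBigO_exp_of_cexp_neg_mul
    (h : (fun t : ℝ => Complex.exp (-q * t) * g t) =O[atBot]
      fun t => Real.exp ((β - q.re) * t)) :
    g =O[atBot] fun t => Real.exp (β * t) := by
  have hq : (fun t : ℝ => Complex.exp (q * t)) =O[atBot] fun t => Real.exp (q.re * t) :=
    .of_norm_le fun t => (norm_cexp_mul q t).le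
  refine (hq.mul h).congr (fun t => ?_) fun t => ?_
  · rw [← mul_assoc, ← Complex.exp_add, neg_mul, add_neg_cancel, Complex.exp_zero, one_mul]
  · rw [← Real.exp_add, ← add_mul, add_sub_cancel]

lemma isBigO_exp_of_re_lt (hβ : q.re < β) (hg : ∀ t, HasDerivAt g (q * g t + w t) t)
    (hw : w =O[atBot] fun t => Real.exp (β * t))
    (h0 : Tendsto (fun t : ℝ => Complex.exp (-q * t) * g t) atBot (𝓝 0)) :
    g =O[atBot] fun t => Real.exp (β * t) := by
  obtain ⟨C, T, -, hCT⟩ := exists_norm_cexp_neg_mul_sub_le hβ.ne hg hw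
  refine isBigO_exp_of_cexp_neg_mul (q := q) (.of_bound (C / (β - q.re)) ?_)
  filter_upwards [eventually_le_atBot T] with t ht
  have hlim : Tendsto (fun s => Real.exp ((β - q.re) * s)) atBot (𝓝 0) :=
    Real.tendsto_exp_atBot.comp (tendsto_id.const_mul_atBot (sub_pos.2 hβ))
  have hle := le_of_tendsto_of_tendsto (tendsto_const_nhds.sub h0).norm
    ((tendsto_const_nhds.sub hlim).const_mul (C / (β - q.re)))
    ((eventually_le_atBot t).mono fun s hs => hCT s t hs ht)
  rwa [sub_zero, sub_zero, ← Real.norm_of_nonneg (Real.exp_pos _).le] at hle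

lemma isBigO_exp_of_lt_re (hβ : β < q.re) (hg : ∀ t, HasDerivAt g (q * g t + w t) t)
    (hw : w =O[atBot] fun t => Real.exp (β * t)) :
    g =O[atBot] fun t => Real.exp (β * t) := by
  obtain ⟨C, T, hC, hCT⟩ := exists_norm_cexp_neg_mul_sub_le hβ.ne' hg hw
  have hone : (fun _ : ℝ => Complex.exp (-q * T) * g T) =O[atBot]
      fun t => Real.exp ((β - q.re) * t) := by
    refine (isBigO_const_const _ (one_ne_zero (α := ℝ)) _).trans (.of_bound 1 ?_)
    filter_upwards [eventually_le_atBot 0] with t ht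
    rw [norm_one, one_mul, Real.norm_of_nonneg (Real.exp_pos _).le]
    exact Real.one_le_exp (mul_nonneg_of_nonpos_of_nonpos (sub_neg.2 hβ).le ht)
  have hsub : (fun t : ℝ => Complex.exp (-q * t) * g t - Complex.exp (-q * T) * g T) =O[atBot]
      fun t => Real.exp ((β - q.re) * t) := by
    refine .of_bound (C / (q.re - β)) ?_
    filter_upwards [eventually_le_atBot T] with t ht
    rw [norm_sub_rev, Real.norm_of_nonneg (Real.exp_pos _).le]
    refine (hCT t T ht le_rfl).trans ?_
    rw [← neg_sub q.re β, div_neg, neg_mul, ← mul_neg, neg_sub]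
    refine mul_le_mul_of_nonneg_left (sub_le_self _ (Real.exp_pos _).le)
      (div_nonneg hC (sub_pos.2 hβ).le)
  exact isBigO_exp_of_cexp_neg_mul ((hsub.add hone).congr_left fun t => sub_add_cancel _ _)

/-- Smooth functions all of whose derivatives are `o(exp (-2 t))` at `-∞`, the growth that
mollification allows for functions in the weighted space `L²(exp (4 t) dt)`. -/
def IsModerate (u : ℝ → ℂ) : Prop :=
  ContDiff ℝ ∞ u ∧ ∀ k, Tendsto (fun t : ℝ => Real.exp (2 * t) * ‖iteratedDeriv k u t‖) atBot (𝓝 0)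

lemma IsModerate.deriv_sub {u : ℝ → ℂ} (hu : IsModerate u) (q : ℂ) :
    IsModerate fun t => deriv u t - q * u t := by
  have hd : ContDiff ℝ ∞ (deriv u) := by simpa using contDiff_iteratedDeriv hu.1 1
  refine ⟨hd.sub (contDiff_const.mul hu.1), fun k => ?_⟩
  refine squeeze_zero (fun t => by positivity) (fun t => ?_)
    (by simpa using (hu.2 (k + 1)).add ((hu.2 k).const_mul ‖q‖))
  have hk : iteratedDeriv k (fun t => deriv u t - q * u t) t =
      iteratedDeriv (k + 1) u t - q * iteratedDeriv k u t := by
    rw [iteratedDeriv_sub_const_mul hd hu.1, iteratedDeriv_succ']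
  calc _ ≤ Real.exp (2 * t) * (‖iteratedDeriv (k + 1) u t‖ + ‖q * iteratedDeriv k u t‖) := by
        rw [hk]
        gcongr
        exact norm_sub_le _ _
    _ = _ := by rw [norm_mul]; ring

lemma IsModerate.isBigO_exp {u : ℝ → ℂ} (hu : IsModerate u) {q : ℂ} (hq : 2 ≤ |q.re|)
    (h : (fun t => deriv u t - q * u t) =O[atBot] Real.exp) : u =O[atBot] Real.exp := by
  have hderiv (t : ℝ) : HasDerivAt u (q * u t + (deriv u t - q * u t)) t :=
    (hu.1.differentiable (by simp) t).hasDerivAt.congr_deriv (by ring)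
  have hexp : Real.exp = fun t => Real.exp (1 * t) := by simp
  rw [hexp] at h ⊢
  rcases le_abs.1 hq with hq | hq
  · exact isBigO_exp_of_lt_re (by linarith) hderiv h
  · refine isBigO_exp_of_re_lt (by linarith) hderiv h ?_
    rw [tendsto_zero_iff_norm_tendsto_zero]
    refine squeeze_zero' (.of_forall fun _ => norm_nonneg _) ?_ (hu.2 0)
    filter_upwards [eventually_le_atBot 0] with t ht
    rw [norm_mul, norm_cexp_mul, iteratedDeriv_zero]
    gcongr Real.exp ?_ * _
    exact mul_le_mul_of_nonpos_right (by simpa using hq) ht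

lemma exists_eq_sq_add_sq_eq_sq_mul_sq (a K : ℂ) :
    ∃ q₁ q₂ : ℂ, a = q₁ ^ 2 + q₂ ^ 2 ∧ K = q₁ ^ 2 * q₂ ^ 2 := by
  obtain ⟨d, hd⟩ := IsAlgClosed.exists_pow_nat_eq (a ^ 2 - 4 * K) two_pos
  obtain ⟨q₁, h₁⟩ := IsAlgClosed.exists_pow_nat_eq ((a + d) / 2) two_pos
  obtain ⟨q₂, h₂⟩ := IsAlgClosed.exists_pow_nat_eq ((a - d) / 2) two_pos
  refine ⟨q₁, q₂, by rw [h₁, h₂]; ring, ?_⟩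
  rw [h₁, h₂]
  linear_combination hd / 4

lemma deriv_deriv_sub_add {u : ℝ → ℂ} (hu : ContDiff ℝ ∞ u) (q : ℂ) (t : ℝ) :
    deriv (fun t => deriv u t - q * u t) t - -q * (deriv u t - q * u t) =
      iteratedDeriv 2 u t - q ^ 2 * u t := by
  have h := (hasDerivAt_iteratedDeriv hu 1 t).fun_sub
    ((hasDerivAt_iteratedDeriv hu 0 t).const_mul q)
  simp only [iteratedDeriv_one, iteratedDeriv_zero, zero_add, one_add_one_eq_two] at h
  rw [h.deriv]
  ring

/-- The four first order factors of `quarticOp a K` are inverted one after the other. -/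
lemma IsModerate.isBigO_exp_of_quarticOp {a K : ℝ}
    (hroots : ∀ q : ℂ, q ^ 4 - a * q ^ 2 + K = 0 → 2 ≤ |q.re|) {u : ℝ → ℂ}
    (hu : IsModerate u) (hP : quarticOp a K u =O[atBot] Real.exp) : u =O[atBot] Real.exp := by
  obtain ⟨q₁, q₂, ha, hK⟩ := exists_eq_sq_add_sq_eq_sq_mul_sq a K
  have h₁ : 2 ≤ |q₁.re| := hroots q₁ (by rw [ha, hK]; ring)
  have h₂ : 2 ≤ |q₂.re| := hroots q₂ (by rw [ha, hK]; ring)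
  have h₁' : 2 ≤ |(-q₁).re| := by rwa [Complex.neg_re, abs_neg]
  have h₂' : 2 ≤ |(-q₂).re| := by rwa [Complex.neg_re, abs_neg]
  have m₁ := hu.deriv_sub q₁
  have m₂ := m₁.deriv_sub (-q₁)
  have m₃ := m₂.deriv_sub q₂
  refine hu.isBigO_exp h₁ (m₁.isBigO_exp h₁' (m₂.isBigO_exp h₂ (m₃.isBigO_exp h₂' ?_)))
  have hu₂ : ContDiff ℝ ∞ (iteratedDeriv 2 u) := contDiff_iteratedDeriv hu.1 2
  have hP' : quarticOp a K u =
      fun t => iteratedDeriv 2 (fun t => iteratedDeriv 2 u t - q₁ ^ 2 * u t) t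
        - q₂ ^ 2 * (iteratedDeriv 2 u t - q₁ ^ 2 * u t) := by
    funext t
    have h4 : iteratedDeriv 2 (iteratedDeriv 2 u) = iteratedDeriv 4 u := by
      simp only [iteratedDeriv_succ, iteratedDeriv_zero]
    rw [iteratedDeriv_sub_const_mul hu₂ hu.1, h4, quarticOp, ha, hK]
    ring
  rw [hP'] at hP
  refine hP.congr_left fun t => ?_
  rw [deriv_deriv_sub_add m₂.1]
  simp only [deriv_deriv_sub_add hu.1]

end Decay

section Minkowski

variable {α β 𝕜 E : Type*} [MeasurableSpace α] [MeasurableSpace β] {μ : Measure α} {ν : Measure β}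

lemma sq_lintegral_mul_le {k F : α → ℝ≥0∞} (hk : AEMeasurable k μ) (hF : AEMeasurable F μ) :
    (∫⁻ x, k x * F x ∂μ) ^ 2 ≤ (∫⁻ x, k x ∂μ) * ∫⁻ x, k x * F x ^ 2 ∂μ := by
  have hsqrt (x : ℝ≥0∞) : x ^ (1 / 2 : ℝ) * x ^ (1 / 2 : ℝ) = x := by
    rw [← ENNReal.rpow_add_of_nonneg _ _ (by norm_num) (by norm_num)]
    norm_num
  have hsq (x : ℝ≥0∞) : (x ^ (1 / 2 : ℝ)) ^ (2 : ℝ) = x := by rw [← ENNReal.rpow_mul]; norm_num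
  have h := ENNReal.lintegral_mul_le_Lp_mul_Lq μ Real.HolderConjugate.two_two
    (hk.pow_const (1 / 2 : ℝ)) ((hk.pow_const (1 / 2 : ℝ)).mul hF)
  simp only [Pi.mul_apply, ← mul_assoc, hsqrt, ENNReal.mul_rpow_of_nonneg _ _ zero_le_two,
    hsq] at h
  calc (∫⁻ x, k x * F x ∂μ) ^ 2
      ≤ ((∫⁻ x, k x ∂μ) ^ (1 / 2 : ℝ) * (∫⁻ x, k x * F x ^ (2 : ℝ) ∂μ) ^ (1 / 2 : ℝ)) ^ 2 := by
        gcongr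
    _ = (∫⁻ x, k x ∂μ) * ∫⁻ x, k x * F x ^ 2 ∂μ := by
        simp only [mul_pow, ← ENNReal.rpow_two, hsq]

variable [NormedAddCommGroup E]

lemma eLpNorm_two_sq (f : α → E) : eLpNorm f 2 μ ^ 2 = ∫⁻ x, ‖f x‖ₑ ^ 2 ∂μ := by
  simpa using eLpNorm_nnreal_pow_eq_lintegral (f := f) (μ := μ) (p := 2) two_ne_zero

variable [NormedSpace ℝ E] [RCLike 𝕜] [NormedSpace 𝕜 E] [SFinite μ] [SFinite ν]

lemma eLpNorm_integral_smul_le {κ : β → 𝕜} {G : α → β → E} (hκ : AEStronglyMeasurable κ ν)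
    (hG : AEStronglyMeasurable (Function.uncurry G) (μ.prod ν)) {C : ℝ≥0∞}
    (hC : ∀ s, κ s ≠ 0 → eLpNorm (fun t => G t s) 2 μ ≤ C) :
    eLpNorm (fun t => ∫ s, κ s • G t s ∂ν) 2 μ ≤ (∫⁻ s, ‖κ s‖ₑ ∂ν) * C := by
  rw [← ENNReal.pow_le_pow_left_iff two_ne_zero, eLpNorm_two_sq]
  have hprod : AEMeasurable (Function.uncurry fun t s => ‖κ s‖ₑ * ‖G t s‖ₑ ^ 2) (μ.prod ν) :=
    hκ.enorm.comp_snd.mul (hG.enorm.pow_const 2)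
  calc ∫⁻ t, ‖∫ s, κ s • G t s ∂ν‖ₑ ^ 2 ∂μ
      ≤ ∫⁻ t, (∫⁻ s, ‖κ s‖ₑ ∂ν) * ∫⁻ s, ‖κ s‖ₑ * ‖G t s‖ₑ ^ 2 ∂ν ∂μ := by
        refine lintegral_mono_ae ?_
        filter_upwards [hG.prodMk_left] with t ht
        refine le_trans ?_ (sq_lintegral_mul_le hκ.enorm ht.enorm)
        gcongr
        exact (enorm_integral_le_lintegral_enorm _).trans_eq (by simp only [enorm_smul])
    _ = (∫⁻ s, ‖κ s‖ₑ ∂ν) * ∫⁻ s, ‖κ s‖ₑ * ∫⁻ t, ‖G t s‖ₑ ^ 2 ∂μ ∂ν := by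
        have hmeas : AEMeasurable (fun t => ∫⁻ s, ‖κ s‖ₑ * ‖G t s‖ₑ ^ 2 ∂ν) μ :=
          hprod.lintegral_prod_right'
        rw [lintegral_const_mul'' _ hmeas, lintegral_lintegral_swap hprod]
        exact congrArg _ (lintegral_congr fun s => lintegral_const_mul' _ _ enorm_ne_top)
    _ ≤ (∫⁻ s, ‖κ s‖ₑ ∂ν) * ∫⁻ s, ‖κ s‖ₑ * C ^ 2 ∂ν := by
        refine mul_le_mul_right (lintegral_mono fun s => ?_) _
        by_cases hs : κ s = 0
        · simp [hs]
        rw [← eLpNorm_two_sq]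
        gcongr
        exact hC s hs
    _ = ((∫⁻ s, ‖κ s‖ₑ ∂ν) * C) ^ 2 := by
        rw [lintegral_mul_const'' _ hκ.enorm]
        ring

end Minkowski

section Convolution

variable {κ V W : ℝ → ℂ}

lemma eLpNorm_comp_sub_right (hV : AEStronglyMeasurable V) (s : ℝ) :
    eLpNorm (fun t => V (t - s)) 2 = eLpNorm V 2 :=
  eLpNorm_comp_measurePreserving hV (measurePreserving_sub_right volume s)

lemma eLpNorm_convolution_le (hκ : AEStronglyMeasurable κ) (hV : AEStronglyMeasurable V) :
    eLpNorm (κ ⋆[mul ℝ ℂ] V) 2 ≤ (∫⁻ s, ‖κ s‖ₑ) * eLpNorm V 2 :=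
  eLpNorm_integral_smul_le (G := fun t s => V (t - s)) hκ
    (hV.comp_quasiMeasurePreserving (quasiMeasurePreserving_sub volume volume))
    fun s _ => (eLpNorm_comp_sub_right hV s).le

lemma memLp_convolution (hκ : Continuous κ) (hc : HasCompactSupport κ) (hV : MemLp V 2) :
    MemLp (κ ⋆[mul ℝ ℂ] V) 2 :=
  ⟨(hc.continuous_convolution_left _ hκ
      (hV.locallyIntegrable one_le_two)).aestronglyMeasurable,
    (eLpNorm_convolution_le hκ.aestronglyMeasurable hV.1).trans_lt
      (ENNReal.mul_lt_top (hκ.integrable_of_hasCompactSupport hc).2 hV.2)⟩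

lemma eLpNorm_convolution_sub_le (hκ : Continuous κ) (hc : HasCompactSupport κ)
    (hV : MemLp V 2) {C : ℝ≥0∞}
    (hC : ∀ s, κ s ≠ 0 → eLpNorm (fun t => V (t - s) - V t) 2 ≤ C) :
    eLpNorm (fun t => (κ ⋆[mul ℝ ℂ] V) t - (∫ s, κ s) * V t) 2 ≤ (∫⁻ s, ‖κ s‖ₑ) * C := by
  have hsub (t : ℝ) : (κ ⋆[mul ℝ ℂ] V) t - (∫ s, κ s) * V t = ∫ s, κ s • (V (t - s) - V t) := by
    have i₁ : Integrable fun s => κ s • V (t - s) :=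
      hc.convolutionExists_left (mul ℝ ℂ) hκ
        (hV.locallyIntegrable one_le_two) t
    have i₂ : Integrable fun s => κ s • V t :=
      (hκ.integrable_of_hasCompactSupport hc).smul_const (V t)
    simp only [smul_sub]
    rw [integral_sub i₁ i₂, integral_smul_const]
    rfl
  simp only [hsub]
  exact eLpNorm_integral_smul_le (G := fun t s => V (t - s) - V t) hκ.aestronglyMeasurable
    ((hV.1.comp_quasiMeasurePreserving (quasiMeasurePreserving_sub volume volume)).sub
      hV.1.comp_fst) hC

lemma tendsto_eLpNorm_comp_sub_right_sub (hV : MemLp V 2) :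
    Tendsto (fun s => eLpNorm (fun t => V (t - s) - V t) 2) (𝓝 0) (𝓝 0) := by
  let g : C(ℝ, C(ℝ, ℝ)) := ContinuousMap.curry ⟨fun p : ℝ × ℝ => p.2 - p.1, by fun_prop⟩
  have hg (s : ℝ) : MeasurePreserving (g s) volume volume := measurePreserving_sub_right volume s
  have h := Filter.Tendsto.compMeasurePreservingLp (tendsto_const_nhds (x := hV.toLp V) (f := 𝓝 0))
    (g.continuous.tendsto 0) hg (hg 0) (by norm_num)
  simp only [Lp.toLp_compMeasurePreserving] at h
  rw [Lp.tendsto_Lp_iff_tendsto_eLpNorm''] at h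
  refine h.congr fun s => ?_
  congr 1
  funext t
  simp [g]

lemma tendsto_eLpNorm_convolution_sub {ι : Type*} {l : Filter ι} {κ : ι → ℝ → ℂ}
    (hκ : ∀ i, Continuous (κ i)) (hc : ∀ i, HasCompactSupport (κ i)) {M : ℝ≥0∞} (hM : M ≠ ⊤)
    (hbound : ∀ i, ∫⁻ s, ‖κ i s‖ₑ ≤ M)
    (hsupp : ∀ U ∈ 𝓝 (0 : ℝ), ∀ᶠ i in l, ∀ s, κ i s ≠ 0 → s ∈ U)
    (hone : Tendsto (fun i => ∫ s, κ i s) l (𝓝 1)) (hV : MemLp V 2) :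
    Tendsto (fun i => eLpNorm (fun t => (κ i ⋆[mul ℝ ℂ] V) t - V t) 2) l (𝓝 0) := by
  have h₁ : Tendsto (fun i => eLpNorm (fun t => (κ i ⋆[mul ℝ ℂ] V) t - (∫ s, κ i s) * V t) 2) l
      (𝓝 0) := by
    refine ENNReal.tendsto_nhds_zero.2 fun ε hε => ?_
    obtain ⟨δ, hδ, hδε⟩ := ENNReal.exists_pos_mul_lt hM hε.ne'
    filter_upwards [hsupp _ (ENNReal.tendsto_nhds_zero.1 (tendsto_eLpNorm_comp_sub_right_sub hV) δ
      hδ)] with i hi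
    calc _ ≤ (∫⁻ s, ‖κ i s‖ₑ) * δ := eLpNorm_convolution_sub_le (hκ i) (hc i) hV hi
      _ ≤ M * δ := by gcongr; exact hbound i
      _ ≤ ε := by rw [mul_comm]; exact hδε.le
  have h₂ : Tendsto (fun i => ‖(∫ s, κ i s) - 1‖ₑ * eLpNorm V 2) l (𝓝 0) := by
    have hsub : Tendsto (fun i => ‖(∫ s, κ i s) - 1‖ₑ) l (𝓝 0) :=
      tendsto_zero_iff_enorm_tendsto_zero.1 (by simpa using hone.sub_const 1)
    simpa using ENNReal.Tendsto.mul_const hsub (.inr hV.2.ne)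
  refine tendsto_of_tendsto_of_tendsto_of_le_of_le tendsto_const_nhds
    (by simpa using h₁.add h₂) (fun _ => zero_le) fun i => ?_
  have hi := memLp_convolution (hκ i) (hc i) hV
  have hsplit : (fun t => (κ i ⋆[mul ℝ ℂ] V) t - V t) =
      (fun t => (κ i ⋆[mul ℝ ℂ] V) t - (∫ s, κ i s) * V t) + ((∫ s, κ i s) - 1) • V := by
    funext t
    simp only [Pi.add_apply, Pi.smul_apply, smul_eq_mul]
    ring
  rw [hsplit, ← eLpNorm_const_smul]
  exact eLpNorm_add_le (hi.sub (hV.const_mul _)).1 (hV.const_smul _).1 one_le_two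

lemma enorm_convolution_sq_le (hκ : Continuous κ) (hV : AEStronglyMeasurable V) (t : ℝ) :
    ‖(κ ⋆[mul ℝ ℂ] V) t‖ₑ ^ 2 ≤ (∫⁻ s, ‖κ s‖ₑ) * ∫⁻ s, ‖κ (t - s)‖ₑ * ‖V s‖ₑ ^ 2 := by
  rw [convolution_eq_swap, ← lintegral_sub_left_eq_self (fun s => ‖κ s‖ₑ) t]
  refine le_trans ?_ (sq_lintegral_mul_le (by fun_prop) hV.enorm)
  gcongr
  exact (enorm_integral_le_lintegral_enorm _).trans_eq
    (by simp only [ContinuousLinearMap.mul_apply', enorm_mul])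

lemma tendsto_lintegral_enorm_mul_cocompact (hκ : Continuous κ) (hc : HasCompactSupport κ)
    {f : ℝ → ℝ≥0∞} (hf : AEMeasurable f) (hfi : ∫⁻ s, f s ≠ ⊤) :
    Tendsto (fun t => ∫⁻ s, ‖κ (t - s)‖ₑ * f s) (cocompact ℝ) (𝓝 0) := by
  have hcount : (cocompact ℝ).IsCountablyGenerated := by
    rw [cocompact_eq_atBot_atTop]; infer_instance
  obtain ⟨M, hM⟩ := hc.exists_bound_of_continuous hκ
  have hle (t s : ℝ) : ‖κ (t - s)‖ₑ * f s ≤ ENNReal.ofReal M * f s := by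
    gcongr
    rw [← ofReal_norm]
    exact ENNReal.ofReal_le_ofReal (hM _)
  rw [← lintegral_zero (μ := volume) (α := ℝ)]
  refine tendsto_lintegral_filter_of_dominated_convergence' (fun s => ENNReal.ofReal M * f s)
    (.of_forall fun t => by fun_prop) (.of_forall fun t => .of_forall (hle t)) ?_
    (.of_forall fun s => ?_)
  · rw [lintegral_const_mul' _ _ ENNReal.ofReal_ne_top]
    exact ENNReal.mul_ne_top ENNReal.ofReal_ne_top hfi
  refine tendsto_const_nhds.congr' ?_
  have hts : Tendsto (fun t => t - s) (cocompact ℝ) (cocompact ℝ) :=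
    (Homeomorph.subRight s).isClosedEmbedding.tendsto_cocompact
  filter_upwards [hts.eventually hc.compl_mem_cocompact] with t ht
  rw [image_eq_zero_of_notMem_tsupport ht, enorm_zero, zero_mul]

lemma tendsto_convolution_cocompact (hκ : Continuous κ) (hc : HasCompactSupport κ)
    (hV : MemLp V 2) : Tendsto (κ ⋆[mul ℝ ℂ] V) (cocompact ℝ) (𝓝 0) := by
  have hsq : Tendsto (fun t => ‖(κ ⋆[mul ℝ ℂ] V) t‖ₑ ^ 2) (cocompact ℝ) (𝓝 0) := by
    refine tendsto_of_tendsto_of_tendsto_of_le_of_le tendsto_const_nhds ?_ (fun _ => zero_le)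
      (enorm_convolution_sq_le hκ hV.1)
    simpa using ENNReal.Tendsto.const_mul
      (tendsto_lintegral_enorm_mul_cocompact hκ hc (hV.1.enorm.pow_const 2)
        (eLpNorm_two_sq V ▸ ENNReal.pow_ne_top hV.2.ne))
      (.inr (hκ.integrable_of_hasCompactSupport hc).2.ne)
  rw [tendsto_zero_iff_enorm_tendsto_zero]
  have hroot := (ENNReal.continuous_rpow_const (y := 1 / 2)).tendsto 0
  rw [ENNReal.zero_rpow_of_pos one_half_pos] at hroot
  refine (hroot.comp hsq).congr fun t => ?_
  rw [Function.comp_apply, ← ENNReal.rpow_natCast, ← ENNReal.rpow_mul]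
  norm_num

end Convolution

section ExpTilt

variable {l : ℝ} {κ V : ℝ → ℂ}

/-- Multiplication by `exp (l t)`: `V` lies in the weighted space `L²(exp (2 l t) dt)` when
`expTilt l V` lies in `L²`. -/
def expTilt (l : ℝ) (V : ℝ → ℂ) (t : ℝ) : ℂ := Real.exp (l * t) * V t

lemma expTilt_expTilt (l m : ℝ) (V : ℝ → ℂ) : expTilt l (expTilt m V) = expTilt (l + m) V := by
  funext t
  rw [expTilt, expTilt, expTilt, ← mul_assoc, ← Complex.ofReal_mul, ← Real.exp_add, add_mul]

lemma expTilt_mul_expTilt (l : ℝ) (U V : ℝ → ℂ) (t : ℝ) :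
    expTilt l U t * expTilt (-l) V t = U t * V t := by
  have h : (Real.exp (l * t) : ℂ) * Real.exp (-l * t) = 1 := by
    rw [← Complex.ofReal_mul, ← Real.exp_add, neg_mul, add_neg_cancel, Real.exp_zero,
      Complex.ofReal_one]
  rw [expTilt, expTilt, mul_mul_mul_comm, h, one_mul]

lemma norm_expTilt (l : ℝ) (V : ℝ → ℂ) (t : ℝ) : ‖expTilt l V t‖ = Real.exp (l * t) * ‖V t‖ := by
  rw [expTilt, norm_mul, Complex.norm_real, Real.norm_of_nonneg (Real.exp_pos _).le]

lemma star_expTilt (l : ℝ) (V : ℝ → ℂ) : star (expTilt l V) = expTilt l (star V) := by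
  funext t
  simp only [expTilt, Pi.star_apply, star_mul', Complex.star_def, Complex.conj_ofReal]

lemma continuous_expTilt (hV : Continuous V) : Continuous (expTilt l V) := by
  unfold expTilt
  fun_prop

lemma contDiff_expTilt (hV : ContDiff ℝ ∞ V) : ContDiff ℝ ∞ (expTilt l V) :=
  (Complex.ofRealCLM.contDiff.comp
    (Real.contDiff_exp.comp (contDiff_const.mul contDiff_id))).mul hV

lemma hasCompactSupport_expTilt (hV : HasCompactSupport V) : HasCompactSupport (expTilt l V) :=
  hV.mul_left

lemma locallyIntegrable_of_memLp_expTilt (hV : MemLp (expTilt l V) 2) : LocallyIntegrable V := by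
  have h : LocallyIntegrable fun t => (Real.exp (-l * t) : ℂ) * expTilt l V t := by
    have h := hV.locallyIntegrable one_le_two
    rw [← locallyIntegrableOn_univ] at h ⊢
    exact h.continuousOn_mul (by fun_prop) isOpen_univ.isLocallyClosed
  have heq : (fun t => (Real.exp (-l * t) : ℂ) * expTilt l V t) = V := by
    have h := expTilt_expTilt (-l) l V
    simp only [neg_add_cancel] at h
    exact h.trans (by funext t; simp [expTilt])
  rwa [heq] at h

lemma expTilt_convolution (l : ℝ) (κ V : ℝ → ℂ) :
    expTilt l (κ ⋆[mul ℝ ℂ] V) = expTilt l κ ⋆[mul ℝ ℂ] expTilt l V := by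
  funext t
  simp only [expTilt, convolution_def, ContinuousLinearMap.mul_apply', ← integral_const_mul]
  refine integral_congr_ae (.of_forall fun s => ?_)
  have h : Real.exp (l * t) = Real.exp (l * s) * Real.exp (l * (t - s)) := by
    rw [← Real.exp_add]
    ring_nf
  simp only [h]
  push_cast
  ring

lemma memLp_expTilt_convolution (hκ : Continuous κ) (hc : HasCompactSupport κ)
    (hV : MemLp (expTilt l V) 2) : MemLp (expTilt l (κ ⋆[mul ℝ ℂ] V)) 2 := by
  rw [expTilt_convolution]
  exact memLp_convolution (continuous_expTilt hκ) (hasCompactSupport_expTilt hc) hV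

lemma tendsto_expTilt_convolution (hκ : Continuous κ) (hc : HasCompactSupport κ)
    (hV : MemLp (expTilt l V) 2) : Tendsto (expTilt l (κ ⋆[mul ℝ ℂ] V)) (cocompact ℝ) (𝓝 0) := by
  rw [expTilt_convolution]
  exact tendsto_convolution_cocompact (continuous_expTilt hκ) (hasCompactSupport_expTilt hc) hV

/-- A sequence of bump functions on the line with supports shrinking to the origin. -/
def shrinkingBump (n : ℕ) : ContDiffBump (0 : ℝ) where
  rIn := 1 / (n + 2)
  rOut := 1 / (n + 1)
  rIn_pos := by positivity
  rIn_lt_rOut := by gcongr; norm_num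

/-- A smooth approximate identity, complex valued in order to be convolved with test functions. -/
def mollifier (n : ℕ) (t : ℝ) : ℂ := (shrinkingBump n).normed volume t

lemma contDiff_mollifier (n : ℕ) : ContDiff ℝ ∞ (mollifier n) :=
  Complex.ofRealCLM.contDiff.comp (ContDiffBump.contDiff_normed _)

lemma hasCompactSupport_mollifier (n : ℕ) : HasCompactSupport (mollifier n) :=
  (ContDiffBump.hasCompactSupport_normed _).comp_left Complex.ofReal_zero

lemma abs_lt_of_mollifier_ne_zero {n : ℕ} {t : ℝ} (ht : mollifier n t ≠ 0) :
    |t| < 1 / ((n : ℝ) + 1) := by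
  have h := Complex.ofReal_ne_zero.1 ht
  rw [← Function.mem_support, ContDiffBump.support_normed_eq] at h
  simpa [shrinkingBump] using h

lemma lintegral_enorm_mollifier (n : ℕ) : ∫⁻ t, ‖mollifier n t‖ₑ = 1 := by
  simp only [mollifier, ← ofReal_norm, Complex.norm_real,
    Real.norm_of_nonneg (ContDiffBump.nonneg_normed _ _)]
  rw [← ofReal_integral_eq_lintegral_ofReal (ContDiffBump.integrable_normed _)
    (.of_forall fun t => ContDiffBump.nonneg_normed _ t), ContDiffBump.integral_normed,
    ENNReal.ofReal_one]

lemma lintegral_enorm_expTilt_mollifier_le (l : ℝ) (n : ℕ) :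
    ∫⁻ t, ‖expTilt l (mollifier n) t‖ₑ ≤ ENNReal.ofReal (Real.exp |l|) := by
  calc ∫⁻ t, ‖expTilt l (mollifier n) t‖ₑ
      ≤ ∫⁻ t, ENNReal.ofReal (Real.exp |l|) * ‖mollifier n t‖ₑ := by
        refine lintegral_mono fun t => ?_
        by_cases ht : mollifier n t = 0
        · simp [expTilt, ht]
        have hle : l * t ≤ |l| := by
          refine (le_abs_self _).trans ?_
          rw [abs_mul]
          refine mul_le_of_le_one_right (abs_nonneg l)
            ((abs_lt_of_mollifier_ne_zero ht).le.trans ?_)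
          exact div_le_one_of_le₀ (by linarith [n.cast_nonneg (α := ℝ)]) (by positivity)
        rw [← ofReal_norm, norm_expTilt, ENNReal.ofReal_mul (Real.exp_pos _).le, ofReal_norm]
        gcongr
    _ = ENNReal.ofReal (Real.exp |l|) := by
        rw [lintegral_const_mul' _ _ ENNReal.ofReal_ne_top, lintegral_enorm_mollifier, mul_one]

lemma tendsto_integral_expTilt_mollifier (l : ℝ) :
    Tendsto (fun n => ∫ t, expTilt l (mollifier n) t) atTop (𝓝 1) := by
  have hrOut : Tendsto (fun n : ℕ => 1 / ((n : ℝ) + 1)) atTop (𝓝 0) :=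
    tendsto_one_div_add_atTop_nhds_zero_nat
  have h := ContDiffBump.convolution_tendsto_right_of_continuous (μ := volume)
    (g := fun t : ℝ => Real.exp (-l * t)) (φ := shrinkingBump) hrOut (by fun_prop) 0
  have h' := (Complex.continuous_ofReal.tendsto _).comp h
  simp only [mul_zero, Real.exp_zero, Complex.ofReal_one] at h'
  refine h'.congr fun n => ?_
  rw [Function.comp_apply, convolution_def, ← integral_complex_ofReal]
  refine integral_congr_ae (.of_forall fun t => ?_)
  simp [expTilt, mollifier, mul_comm]

lemma tendsto_eLpNorm_expTilt_mollifier_sub (hV : MemLp (expTilt l V) 2) :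
    Tendsto (fun n => eLpNorm (fun t => expTilt l (mollifier n ⋆[mul ℝ ℂ] V) t - expTilt l V t) 2)
      atTop (𝓝 0) := by
  simp only [expTilt_convolution]
  refine tendsto_eLpNorm_convolution_sub
    (fun n => continuous_expTilt (contDiff_mollifier n).continuous)
    (fun n => hasCompactSupport_expTilt (hasCompactSupport_mollifier n)) ENNReal.ofReal_ne_top
    (lintegral_enorm_expTilt_mollifier_le l) (fun U hU => ?_)
    (tendsto_integral_expTilt_mollifier l) hV
  obtain ⟨ε, hε, hball⟩ := Metric.mem_nhds_iff.1 hU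
  filter_upwards [tendsto_one_div_add_atTop_nhds_zero_nat.eventually (gt_mem_nhds hε)]
    with n hn s hs
  refine hball ?_
  rw [mem_ball_zero_iff]
  exact (abs_lt_of_mollifier_ne_zero (right_ne_zero_of_mul hs)).trans hn

lemma tendsto_integral_mul {ι : Type*} {f : Filter ι} {A B : ℝ → ℂ} {A' B' : ι → ℝ → ℂ}
    (hA : MemLp A 2) (hB : MemLp B 2) (hA' : ∀ i, MemLp (A' i) 2) (hB' : ∀ i, MemLp (B' i) 2)
    (tA : Tendsto (fun i => eLpNorm (fun t => A' i t - A t) 2) f (𝓝 0))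
    (tB : Tendsto (fun i => eLpNorm (fun t => B' i t - B t) 2) f (𝓝 0)) :
    Tendsto (fun i => ∫ t, A' i t * B' i t) f (𝓝 (∫ t, A t * B t)) := by
  have hinner {F G : ℝ → ℂ} (hF : MemLp F 2) (hG : MemLp G 2) :
      ∫ t, F t * G t = inner ℂ (hF.star.toLp (star F)) (hG.toLp G) := by
    rw [L2.inner_def]
    refine integral_congr_ae ?_
    filter_upwards [hF.star.coeFn_toLp, hG.coeFn_toLp] with t h₁ h₂
    rw [h₁, h₂]
    simp [mul_comm]
  simp only [hinner hA hB, fun i => hinner (hA' i) (hB' i)]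
  refine Tendsto.inner ?_ ((Lp.tendsto_Lp_iff_tendsto_eLpNorm'' _ _ _ _).2 tB)
  refine (Lp.tendsto_Lp_iff_tendsto_eLpNorm'' _ _ _ _).2 (tA.congr fun i => ?_)
  refine eLpNorm_congr_norm_ae (.of_forall fun t => ?_)
  rw [Pi.sub_apply, Pi.star_apply, Pi.star_apply, ← star_sub, norm_star]

end ExpTilt

section WeakSolutions

variable {a K : ℝ} {ρ W F W' F' : ℝ → ℂ}

lemma iteratedDeriv_convolution (hρ : ContDiff ℝ ∞ ρ) (hc : HasCompactSupport ρ)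
    (hW : LocallyIntegrable W) (k : ℕ) :
    iteratedDeriv k (ρ ⋆[mul ℝ ℂ] W) = iteratedDeriv k ρ ⋆[mul ℝ ℂ] W := by
  induction k with
  | zero => simp only [iteratedDeriv_zero]
  | succ k ih =>
    funext t
    rw [iteratedDeriv_succ, ih, iteratedDeriv_succ]
    exact ((hasCompactSupport_iteratedDeriv hc k).hasDerivAt_convolution_left _
      ((contDiff_iteratedDeriv hρ k).of_le (mod_cast le_top)) hW t).deriv

lemma quarticOp_convolution (hρ : ContDiff ℝ ∞ ρ) (hc : HasCompactSupport ρ)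
    (hW : LocallyIntegrable W) : quarticOp a K (ρ ⋆[mul ℝ ℂ] W) = quarticOp a K ρ ⋆[mul ℝ ℂ] W := by
  have hint (k : ℕ) (t : ℝ) : Integrable fun s => iteratedDeriv k ρ s * W (t - s) :=
    (hasCompactSupport_iteratedDeriv hc k).convolutionExists_left (mul ℝ ℂ)
      (contDiff_iteratedDeriv hρ k).continuous hW t
  funext t
  simp only [quarticOp, iteratedDeriv_convolution hρ hc hW, convolution_def,
    ContinuousLinearMap.mul_apply', add_mul, sub_mul, mul_assoc]
  have h₀ := hint 0 t
  rw [iteratedDeriv_zero] at h₀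
  have h₄₂ : Integrable fun s =>
      iteratedDeriv 4 ρ s * W (t - s) - a * (iteratedDeriv 2 ρ s * W (t - s)) :=
    (hint 4 t).sub ((hint 2 t).const_mul _)
  rw [integral_add h₄₂ (h₀.const_mul _), integral_sub (hint 4 t) ((hint 2 t).const_mul _),
    integral_const_mul, integral_const_mul]

/-- `W` is a distributional solution of `quarticOp a K W = F`, where `W` and `F` are Borel functions
in the weighted spaces `L²(exp (4 t) dt)` and `L²(exp (-4 t) dt)`. -/
structure IsWeakSol (a K : ℝ) (W F : ℝ → ℂ) : Prop where
  measurable_left : Measurable W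
  measurable_right : Measurable F
  memLp_left : MemLp (expTilt 2 W) 2
  memLp_right : MemLp (expTilt (-2) F) 2
  integral_mul_eq : ∀ φ : ℝ → ℂ, ContDiff ℝ ∞ φ → HasCompactSupport φ →
    ∫ t, φ t * F t = ∫ t, quarticOp a K φ t * W t

lemma isWeakSol_of_contDiff (hW : ContDiff ℝ ∞ W) (h : MemLp (expTilt 2 W) 2)
    (h' : MemLp (expTilt (-2) (quarticOp a K W)) 2) : IsWeakSol a K W (quarticOp a K W) :=
  ⟨hW.continuous.measurable, (continuous_quarticOp hW).measurable, h, h', fun _ hφ hc =>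
    (integral_quarticOp_mul_eq_of_hasCompactSupport hφ hc hW).symm⟩

namespace IsWeakSol

lemma star (h : IsWeakSol a K W F) : IsWeakSol a K (star W) (star F) where
  measurable_left := continuous_star.measurable.comp h.measurable_left
  measurable_right := continuous_star.measurable.comp h.measurable_right
  memLp_left := by
    rw [← star_expTilt]
    exact h.memLp_left.star
  memLp_right := by
    rw [← star_expTilt]
    exact h.memLp_right.star
  integral_mul_eq φ hφ hc := by
    have h := congrArg Star.star (h.integral_mul_eq (Star.star φ)
      (Complex.conjCLE.contDiff.comp hφ) (hc.comp_left (star_zero ℂ)))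
    simpa only [quarticOp_star, Complex.star_def, ← integral_conj, map_mul, Pi.star_apply,
      Complex.conj_conj] using h

lemma quarticOp_convolution (h : IsWeakSol a K W F) (hρ : ContDiff ℝ ∞ ρ)
    (hc : HasCompactSupport ρ) : quarticOp a K (ρ ⋆[mul ℝ ℂ] W) = ρ ⋆[mul ℝ ℂ] F := by
  rw [EulerOperator.quarticOp_convolution hρ hc (locallyIntegrable_of_memLp_expTilt h.memLp_left)]
  funext t
  rw [convolution_eq_swap, convolution_eq_swap]
  simp only [ContinuousLinearMap.mul_apply', ← quarticOp_comp_const_sub]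
  exact (h.integral_mul_eq _ (hρ.comp (contDiff_const.sub contDiff_id))
    (hc.comp_homeomorph (Homeomorph.subLeft t))).symm

lemma isModerate_convolution (h : IsWeakSol a K W F) (hρ : ContDiff ℝ ∞ ρ)
    (hc : HasCompactSupport ρ) : IsModerate (ρ ⋆[mul ℝ ℂ] W) := by
  have hW := locallyIntegrable_of_memLp_expTilt h.memLp_left
  refine ⟨hc.contDiff_convolution_left _ hρ hW, fun k => ?_⟩
  rw [iteratedDeriv_convolution hρ hc hW]
  simp only [← norm_expTilt]
  exact tendsto_zero_iff_norm_tendsto_zero.1 ((tendsto_expTilt_convolution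
    (contDiff_iteratedDeriv hρ k).continuous (hasCompactSupport_iteratedDeriv hc k)
    h.memLp_left).mono_left atBot_le_cocompact)

lemma isBigO_exp_convolution_right (h : IsWeakSol a K W F) (hρ : ContDiff ℝ ∞ ρ)
    (hc : HasCompactSupport ρ) : (ρ ⋆[mul ℝ ℂ] F) =O[atBot] Real.exp := by
  have hlim := (tendsto_expTilt_convolution hρ.continuous hc h.memLp_right).mono_left
    atBot_le_cocompact
  refine .of_bound 1 ?_
  filter_upwards [hlim.norm.eventually (gt_mem_nhds (norm_zero.trans_lt zero_lt_one)),
    eventually_le_atBot 0] with t ht ht0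
  rw [norm_expTilt, neg_mul, Real.exp_neg, inv_mul_lt_one₀ (Real.exp_pos _)] at ht
  rw [one_mul, Real.norm_of_nonneg (Real.exp_pos _).le]
  exact ht.le.trans (Real.exp_le_exp.2 (by linarith))

lemma isBigO_exp_convolution_left (hroots : ∀ q : ℂ, q ^ 4 - a * q ^ 2 + K = 0 → 2 ≤ |q.re|)
    (h : IsWeakSol a K W F) (hρ : ContDiff ℝ ∞ ρ) (hc : HasCompactSupport ρ) (k : ℕ) :
    iteratedDeriv k (ρ ⋆[mul ℝ ℂ] W) =O[atBot] Real.exp := by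
  have hk := contDiff_iteratedDeriv hρ k
  have hck := hasCompactSupport_iteratedDeriv hc k
  rw [iteratedDeriv_convolution hρ hc (locallyIntegrable_of_memLp_expTilt h.memLp_left)]
  refine (h.isModerate_convolution hk hck).isBigO_exp_of_quarticOp hroots ?_
  rw [h.quarticOp_convolution hk hck]
  exact h.isBigO_exp_convolution_right hk hck

lemma tendsto_lagrangeBracket_atTop (h : IsWeakSol a K W F) (h' : IsWeakSol a K W' F')
    (hρ : ContDiff ℝ ∞ ρ) (hc : HasCompactSupport ρ) :
    Tendsto (lagrangeBracket a (ρ ⋆[mul ℝ ℂ] W) (ρ ⋆[mul ℝ ℂ] W')) atTop (𝓝 0) := by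
  have hlim {W F : ℝ → ℂ} (h : IsWeakSol a K W F) (k : ℕ) :
      Tendsto (iteratedDeriv k (ρ ⋆[mul ℝ ℂ] W)) atTop (𝓝 0) := by
    rw [iteratedDeriv_convolution hρ hc (locallyIntegrable_of_memLp_expTilt h.memLp_left)]
    have h := (tendsto_expTilt_convolution (contDiff_iteratedDeriv hρ k).continuous
      (hasCompactSupport_iteratedDeriv hc k) h.memLp_left).mono_left atTop_le_cocompact
    refine squeeze_zero_norm' ?_ (tendsto_zero_iff_norm_tendsto_zero.1 h)
    filter_upwards [eventually_ge_atTop 0] with t ht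
    rw [norm_expTilt]
    exact le_mul_of_one_le_left (norm_nonneg _) (Real.one_le_exp (by positivity))
  refine tendsto_lagrangeBracket fun j k => ?_
  simpa using (hlim h j).mul (hlim h' k)

lemma tendsto_lagrangeBracket_atBot
    (hroots : ∀ q : ℂ, q ^ 4 - a * q ^ 2 + K = 0 → 2 ≤ |q.re|)
    (h : IsWeakSol a K W F) (h' : IsWeakSol a K W' F') (hρ : ContDiff ℝ ∞ ρ)
    (hc : HasCompactSupport ρ) :
    Tendsto (lagrangeBracket a (ρ ⋆[mul ℝ ℂ] W) (ρ ⋆[mul ℝ ℂ] W')) atBot (𝓝 0) := by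
  refine tendsto_lagrangeBracket fun j k => ?_
  refine ((h.isBigO_exp_convolution_left hroots hρ hc j).mul
    (h'.isBigO_exp_convolution_left hroots hρ hc k)).trans_tendsto ?_
  simpa using Real.tendsto_exp_atBot.mul Real.tendsto_exp_atBot

lemma integrable_convolution_mul (h : IsWeakSol a K W F) (h' : IsWeakSol a K W' F')
    (hρ : ContDiff ℝ ∞ ρ) (hc : HasCompactSupport ρ) :
    Integrable fun t => (ρ ⋆[mul ℝ ℂ] W) t * (ρ ⋆[mul ℝ ℂ] F') t := by
  simp only [← expTilt_mul_expTilt 2 (ρ ⋆[mul ℝ ℂ] W)]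
  exact (memLp_expTilt_convolution hρ.continuous hc h.memLp_left).integrable_mul
    (memLp_expTilt_convolution hρ.continuous hc h'.memLp_right)

lemma integral_convolution_mul_eq (hroots : ∀ q : ℂ, q ^ 4 - a * q ^ 2 + K = 0 → 2 ≤ |q.re|)
    (h : IsWeakSol a K W F) (h' : IsWeakSol a K W' F') (hρ : ContDiff ℝ ∞ ρ)
    (hc : HasCompactSupport ρ) :
    ∫ t, (ρ ⋆[mul ℝ ℂ] F) t * (ρ ⋆[mul ℝ ℂ] W') t =
      ∫ t, (ρ ⋆[mul ℝ ℂ] W) t * (ρ ⋆[mul ℝ ℂ] F') t := by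
  rw [← h.quarticOp_convolution hρ hc, ← h'.quarticOp_convolution hρ hc]
  refine integral_quarticOp_mul_eq (h.isModerate_convolution hρ hc).1
    (h'.isModerate_convolution hρ hc).1 ?_ ?_
    (h.tendsto_lagrangeBracket_atBot hroots h' hρ hc)
    (h.tendsto_lagrangeBracket_atTop h' hρ hc)
  · rw [h.quarticOp_convolution hρ hc]
    simpa only [mul_comm] using h'.integrable_convolution_mul h hρ hc
  · rw [h'.quarticOp_convolution hρ hc]
    exact h.integrable_convolution_mul h' hρ hc

lemma tendsto_integral_mollifier (h : IsWeakSol a K W F) (h' : IsWeakSol a K W' F') :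
    Tendsto (fun n => ∫ t, (mollifier n ⋆[mul ℝ ℂ] W) t * (mollifier n ⋆[mul ℝ ℂ] F') t) atTop
      (𝓝 (∫ t, W t * F' t)) := by
  simp only [← expTilt_mul_expTilt 2 W, ← expTilt_mul_expTilt 2 (mollifier _ ⋆[mul ℝ ℂ] W)]
  exact tendsto_integral_mul h.memLp_left h'.memLp_right
    (fun n => memLp_expTilt_convolution (contDiff_mollifier n).continuous
      (hasCompactSupport_mollifier n) h.memLp_left)
    (fun n => memLp_expTilt_convolution (contDiff_mollifier n).continuous
      (hasCompactSupport_mollifier n) h'.memLp_right)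
    (tendsto_eLpNorm_expTilt_mollifier_sub h.memLp_left)
    (tendsto_eLpNorm_expTilt_mollifier_sub h'.memLp_right)

theorem integral_eq (hroots : ∀ q : ℂ, q ^ 4 - a * q ^ 2 + K = 0 → 2 ≤ |q.re|)
    (h : IsWeakSol a K W F) (h' : IsWeakSol a K W' F') :
    ∫ t, F t * W' t = ∫ t, W t * F' t := by
  have hlim := h'.tendsto_integral_mollifier h
  simp only [mul_comm (W' _), mul_comm ((mollifier _ ⋆[mul ℝ ℂ] W') _)] at hlim
  refine tendsto_nhds_unique hlim ((h.tendsto_integral_mollifier h').congr fun n => ?_)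
  exact (h.integral_convolution_mul_eq hroots h' (contDiff_mollifier n)
    (hasCompactSupport_mollifier n)).symm

end IsWeakSol

end WeakSolutions

section HalfLine

/-- The function on `(0, ∞)` given by `r ^ p * u (log r)`: the logarithmic substitution with which
Euler expressions become constant coefficient ones. -/
def eulerPull (p : ℝ) (u : ℝ → ℂ) (r : ℝ) : ℂ := (r ^ p : ℝ) * u (Real.log r)

/-- The differential expression `d² / dr² - b / r²`. -/
def besselExp (b : ℝ) (φ : ℝ → ℂ) (r : ℝ) : ℂ := deriv (deriv φ) r - (b / r ^ 2 : ℝ) * φ r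

/-- The differential expression `(d² / dr² - b / r²)² + c / r⁴`. -/
def eulerExp (b c : ℝ) (φ : ℝ → ℂ) (r : ℝ) : ℂ :=
  besselExp b (besselExp b φ) r + (c / r ^ 4 : ℝ) * φ r

variable {b c p q : ℝ} {u u' u'' v φ ψ : ℝ → ℂ}

lemma eqOn_eulerPull_expTilt_comp_exp (p : ℝ) (φ : ℝ → ℂ) :
    EqOn (eulerPull p (expTilt (-p) (φ ∘ Real.exp))) φ (Ioi 0) := fun r hr => by
  have h : (r ^ p : ℝ) * Real.exp (-p * Real.log r) = 1 := by
    rw [Real.rpow_def_of_pos hr, ← Real.exp_add]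
    ring_nf
    exact Real.exp_zero
  rw [eulerPull, expTilt, ← mul_assoc, ← Complex.ofReal_mul, h, Function.comp_apply,
    Real.exp_log hr, Complex.ofReal_one, one_mul]

lemma ofReal_div_mul_eulerPull (d : ℝ) {m : ℕ} {r : ℝ} (hr : 0 < r) :
    (d / r ^ m : ℝ) * eulerPull p u r = eulerPull (p - m) (fun t => d * u t) r := by
  rw [eulerPull, eulerPull, Real.rpow_sub_natCast hr.ne']
  push_cast
  ring

lemma eqOn_deriv_eulerPull (p : ℝ) (hu : ∀ t, HasDerivAt u (u' t) t) :
    EqOn (deriv (eulerPull p u)) (eulerPull (p - 1) fun t => u' t + p * u t) (Ioi 0) :=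
  fun r (hr : 0 < r) => by
    have hlog := (hu (Real.log r)).scomp r (Real.hasDerivAt_log hr.ne')
    have hpow := (Real.hasDerivAt_rpow_const (p := p) (.inl hr.ne')).ofReal_comp
    have hp : r ^ p = r ^ (p - 1) * r := by
      rw [Real.rpow_sub_one hr.ne', div_mul_cancel₀ _ hr.ne']
    have hne : (r : ℂ) ≠ 0 := Complex.ofReal_ne_zero.2 hr.ne'
    refine (hpow.mul hlog).deriv.trans ?_
    rw [eulerPull, Function.comp_apply, Complex.real_smul, hp]
    push_cast
    field_simp
    ring

lemma eqOn_besselExp (h : EqOn φ ψ (Ioi 0)) : EqOn (besselExp b φ) (besselExp b ψ) (Ioi 0) :=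
  fun r hr => by
    rw [besselExp, besselExp, (h.deriv isOpen_Ioi).deriv isOpen_Ioi hr, h hr]

lemma eqOn_eulerExp (h : EqOn φ ψ (Ioi 0)) : EqOn (eulerExp b c φ) (eulerExp b c ψ) (Ioi 0) :=
  fun r hr => by
    rw [eulerExp, eulerExp, eqOn_besselExp (eqOn_besselExp h) hr, h hr]

lemma eqOn_besselExp_eulerPull (b p : ℝ) (hu : ∀ t, HasDerivAt u (u' t) t)
    (hu' : ∀ t, HasDerivAt u' (u'' t) t) :
    EqOn (besselExp b (eulerPull p u)) (eulerPull (p - 2) fun t =>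
      u'' t + (2 * p - 1) * u' t + (p * (p - 1) - b) * u t) (Ioi 0) := fun r hr => by
  have h (t : ℝ) : HasDerivAt (fun t => u' t + p * u t) (u'' t + p * u' t) t :=
    (hu' t).add ((hu t).const_mul (p : ℂ))
  rw [besselExp, (eqOn_deriv_eulerPull p hu).deriv isOpen_Ioi hr, eqOn_deriv_eulerPull _ h hr,
    ofReal_div_mul_eulerPull b hr, sub_sub, one_add_one_eq_two]
  simp only [eulerPull]
  push_cast
  ring

-- With the exponent `3 / 2` the first order terms of the two Bessel factors are opposite, so that
-- only even derivatives survive.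
lemma eqOn_eulerExp_eulerPull (b c : ℝ) (hu : ContDiff ℝ ∞ u) :
    EqOn (eulerExp b c (eulerPull (3 / 2) u))
      (eulerPull (-(5 / 2)) (quarticOp (2 * b + 5 / 2) ((b - 3 / 4) ^ 2 + c) u)) (Ioi 0) :=
  fun r hr => by
    have h := hasDerivAt_iteratedDeriv hu
    let v (k : ℕ) (t : ℝ) : ℂ := iteratedDeriv (k + 2) u t + 2 * iteratedDeriv (k + 1) u t
      + (3 / 4 - b) * iteratedDeriv k u t
    have hv (k : ℕ) (t : ℝ) : HasDerivAt (v k) (v (k + 1) t) t :=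
      ((h (k + 2) t).add ((h (k + 1) t).const_mul 2)).add ((h k t).const_mul _)
    have hfirst : EqOn (besselExp b (eulerPull (3 / 2) u)) (eulerPull (-(1 / 2)) (v 0))
        (Ioi 0) := fun r hr => by
      rw [← iteratedDeriv_zero (f := u), eqOn_besselExp_eulerPull b _ (h 0) (h 1) hr]
      norm_num [eulerPull, v]
    rw [eulerExp, eqOn_besselExp hfirst hr, eqOn_besselExp_eulerPull b _ (hv 0) (hv 1) hr,
      ofReal_div_mul_eulerPull c hr]
    norm_num [eulerPull, quarticOp, v]
    ring

lemma integral_lebIoi {E : Type*} [NormedAddCommGroup E] [NormedSpace ℝ E] (g : ℝ → E) :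
    ∫ r, g r ∂lebIoi = ∫ t, Real.exp t • g (Real.exp t) := by
  have h := integral_image_eq_integral_abs_deriv_smul MeasurableSet.univ
    (fun t _ => (Real.hasDerivAt_exp t).hasDerivWithinAt) Real.exp_injective.injOn g
  simpa only [lebIoi, image_univ, Real.range_exp, Measure.restrict_univ, Real.abs_exp] using h

lemma integrable_lebIoi_iff {E : Type*} [NormedAddCommGroup E] [NormedSpace ℝ E] {g : ℝ → E} :
    Integrable g lebIoi ↔ Integrable fun t => Real.exp t • g (Real.exp t) := by
  have h := integrableOn_image_iff_integrableOn_abs_deriv_smul MeasurableSet.univ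
    (fun t _ => (Real.hasDerivAt_exp t).hasDerivWithinAt) Real.exp_injective.injOn g
  simpa only [lebIoi, IntegrableOn, image_univ, Real.range_exp, Measure.restrict_univ,
    Real.abs_exp] using h

lemma ae_eq_lebIoi_of_eqOn (h : EqOn φ ψ (Ioi 0)) : φ =ᵐ[lebIoi] ψ :=
  (ae_restrict_mem measurableSet_Ioi).mono h

lemma eulerPull_exp (p : ℝ) (u : ℝ → ℂ) (t : ℝ) : eulerPull p u (Real.exp t) = expTilt p u t := by
  rw [eulerPull, expTilt, Real.log_exp, ← Real.exp_mul, mul_comm t]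

lemma memLp_eulerPull_iff (hu : Measurable u) :
    MemLp (eulerPull p u) 2 lebIoi ↔ MemLp (expTilt (p + 1 / 2) u) 2 := by
  have hpull : Measurable (eulerPull p u) := by
    unfold eulerPull
    fun_prop
  have htilt : Measurable (expTilt (p + 1 / 2) u) := by
    unfold expTilt
    fun_prop
  rw [memLp_two_iff_integrable_sq_norm hpull.aestronglyMeasurable,
    memLp_two_iff_integrable_sq_norm htilt.aestronglyMeasurable, integrable_lebIoi_iff]
  refine integrable_congr (.of_forall fun t => ?_)
  beta_reduce
  rw [eulerPull_exp, norm_expTilt, norm_expTilt, smul_eq_mul, mul_pow, mul_pow, ← mul_assoc,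
    ← Real.exp_nat_mul, ← Real.exp_nat_mul, ← Real.exp_add]
  ring_nf

lemma exists_ae_eq_eulerPull (p : ℝ) (f : Lp ℂ 2 lebIoi) :
    ∃ u, Measurable u ∧ MemLp (expTilt (p + 1 / 2) u) 2 ∧ f =ᵐ[lebIoi] eulerPull p u := by
  have hu : Measurable (expTilt (-p) (f ∘ Real.exp)) :=
    Measurable.mul (by fun_prop)
      ((Lp.stronglyMeasurable f).measurable.comp Real.measurable_exp)
  have heq := ae_eq_lebIoi_of_eqOn (eqOn_eulerPull_expTilt_comp_exp p f)
  exact ⟨_, hu, (memLp_eulerPull_iff hu).1 ((Lp.memLp f).ae_eq heq.symm), heq.symm⟩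

lemma inner_eq_integral_of_ae_eq_eulerPull {f g : Lp ℂ 2 lebIoi} (hpq : p + q = -1)
    (hf : f =ᵐ[lebIoi] eulerPull p u) (hg : g =ᵐ[lebIoi] eulerPull q v) :
    inner ℂ f g = ∫ t, star u t * v t := by
  have h : inner ℂ f g = ∫ r, star (eulerPull p u r) * eulerPull q v r ∂lebIoi := by
    rw [L2.inner_def]
    refine integral_congr_ae ?_
    filter_upwards [hf, hg] with r hfr hgr
    rw [hfr, hgr, RCLike.inner_apply, mul_comm]
    rfl
  rw [h, integral_lebIoi]
  congr 1 with t
  have hexp : Real.exp t * (Real.exp (p * t) * Real.exp (q * t)) = 1 := by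
    rw [← Real.exp_add, ← Real.exp_add, ← add_mul, hpq, neg_one_mul, add_neg_cancel, Real.exp_zero]
  simp only [eulerPull_exp, expTilt, star_mul', Complex.star_def, Complex.conj_ofReal,
    Complex.real_smul, Pi.star_apply]
  calc _ = ((Real.exp t * (Real.exp (p * t) * Real.exp (q * t)) : ℝ) : ℂ)
        * (conj (u t) * v t) := by
        push_cast
        ring
    _ = conj (u t) * v t := by rw [hexp, Complex.ofReal_one, one_mul]

end HalfLine

section SpanAdjoint

variable {H : Type*} [NormedAddCommGroup H] [InnerProductSpace ℂ H] {G : Set (H × H)}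

lemma mem_adjoint_span_iff {x : H × H} :
    x ∈ (Submodule.span ℂ G).adjoint ↔ ∀ p ∈ G, inner ℂ p.2 x.1 = inner ℂ p.1 x.2 := by
  rw [Submodule.mem_adjoint_iff]
  refine ⟨fun h p hp => sub_eq_zero.1 (h p.1 p.2 (Submodule.subset_span hp)), fun h y z hyz => ?_⟩
  refine Submodule.span_induction (p := fun p _ => inner ℂ p.2 x.1 - inner ℂ p.1 x.2 = 0)
    (fun p hp => sub_eq_zero.2 (h p hp)) (by simp) (fun p q _ _ hp hq => ?_)
    (fun z p _ hp => ?_) hyz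
  · simp only [Prod.snd_add, Prod.fst_add, inner_add_left]
    linear_combination hp + hq
  · simp only [Prod.smul_snd, Prod.smul_fst, inner_smul_left, ← mul_sub, hp, mul_zero]

lemma adjoint_le_adjoint_adjoint_span_iff :
    (Submodule.span ℂ G).adjoint ≤ (Submodule.span ℂ G).adjoint.adjoint ↔
      ∀ x ∈ (Submodule.span ℂ G).adjoint, ∀ y ∈ (Submodule.span ℂ G).adjoint,
        inner ℂ x.2 y.1 = inner ℂ x.1 y.2 := by
  simp only [SetLike.le_def, Submodule.mem_adjoint_iff _ (_ : H × H), sub_eq_zero]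
  exact ⟨fun h x hx y hy => h hy x.1 x.2 hx, fun h y hy a b hab => h (a, b) hab y hy⟩

lemma dense_domain_toLinearPMap (g : Submodule ℂ (H × H)) [CompleteSpace H]
    (h : ∀ y : H, (∀ p ∈ g, inner ℂ p.1 y = 0) → y = 0) :
    Dense (g.toLinearPMap.domain : Set H) := by
  rw [Submodule.dense_iff_topologicalClosure_eq_top, Submodule.topologicalClosure_eq_top_iff,
    Submodule.eq_bot_iff]
  exact fun y hy => h y fun p hp =>
    (Submodule.mem_orthogonal _ _).1 hy _ ⟨p, hp, rfl⟩

lemma essentiallySelfAdjoint_toLinearPMap_iff [CompleteSpace H] {g : Submodule ℂ (H × H)}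
    (hsymm : g ≤ g.adjoint) (htotal : ∀ y : H, (∀ p ∈ g, inner ℂ p.1 y = 0) → y = 0) :
    EssentiallySelfAdjoint g.toLinearPMap ↔ g.adjoint ≤ g.adjoint.adjoint := by
  have hsingle (x : H × H) (hx : x ∈ g) (hx0 : x.1 = 0) : x.2 = 0 := htotal _ fun p hp => by
    have h := (Submodule.mem_adjoint_iff _ _).1 (hsymm hx) p.1 p.2 hp
    rwa [hx0, inner_zero_right, zero_sub, neg_eq_zero] at h
  have hdense := dense_domain_toLinearPMap g htotal
  have hgraph : g.toLinearPMap.adjoint.graph = g.adjoint := by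
    rw [LinearPMap.adjoint_graph_eq_graph_adjoint hdense, Submodule.toLinearPMap_graph_eq _ hsingle]
  have hdense' : Dense (g.toLinearPMap.adjoint.domain : Set H) := by
    refine hdense.mono fun x hx => ?_
    obtain ⟨p, hp, rfl⟩ := hx
    exact LinearPMap.mem_domain_of_mem_graph (y := p.2) (hgraph ▸ hsymm hp)
  have hanti : g.adjoint.adjoint ≤ g.adjoint := fun x hx => by
    rw [Submodule.mem_adjoint_iff] at hx ⊢
    exact fun y z hyz => hx y z (hsymm hyz)
  have hgraph' : g.toLinearPMap.adjoint.adjoint.graph = g.adjoint.adjoint := by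
    rw [LinearPMap.adjoint_graph_eq_graph_adjoint hdense', hgraph]
  rw [EssentiallySelfAdjoint, and_iff_right hdense, LinearPMap.isSelfAdjoint_def]
  refine ⟨fun h => ?_, fun h => LinearPMap.eq_of_eq_graph ?_⟩
  · rw [← hgraph', h, hgraph]
  · rw [hgraph', hgraph, le_antisymm hanti h]

theorem essentiallySelfAdjoint_span_iff [CompleteSpace H]
    (hsymm : ∀ p ∈ G, ∀ q ∈ G, inner ℂ p.2 q.1 = inner ℂ p.1 q.2)
    (htotal : ∀ y : H, (∀ p ∈ G, inner ℂ p.1 y = 0) → y = 0) :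
    EssentiallySelfAdjoint (Submodule.span ℂ G).toLinearPMap ↔
      ∀ x y : H × H, (∀ p ∈ G, inner ℂ p.2 x.1 = inner ℂ p.1 x.2) →
        (∀ p ∈ G, inner ℂ p.2 y.1 = inner ℂ p.1 y.2) → inner ℂ x.2 y.1 = inner ℂ x.1 y.2 := by
  rw [essentiallySelfAdjoint_toLinearPMap_iff, adjoint_le_adjoint_adjoint_span_iff]
  · simp only [mem_adjoint_span_iff]
    exact ⟨fun h x y hx hy => h x hx y hy, fun h x hx y hy => h x y hx hy⟩
  · exact Submodule.span_le.2 fun q hq => mem_adjoint_span_iff.2 fun p hp => hsymm p hp q hq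
  · exact fun y hy => htotal y fun p hp => hy p (Submodule.subset_span hp)

end SpanAdjoint

section TestPairs

variable {b c p : ℝ} {W F : ℝ → ℂ} {P x : Lp ℂ 2 lebIoi × Lp ℂ 2 lebIoi}

lemma exists_eqOn_eulerPull (p : ℝ) {φ : ℝ → ℂ} (hφ : ContDiff ℝ ∞ φ) (hc : HasCompactSupport φ)
    (hsupp : tsupport φ ⊆ Ioi 0) :
    ∃ w, ContDiff ℝ ∞ w ∧ HasCompactSupport w ∧ EqOn φ (eulerPull p w) (Ioi 0) := by
  have hcomp : HasCompactSupport (φ ∘ Real.exp) := by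
    refine HasCompactSupport.intro (hc.isCompact.image_of_continuousOn
      (Real.continuousOn_log.mono fun r hr => (hsupp hr).ne')) fun t ht => ?_
    by_contra hne
    exact ht ⟨Real.exp t, subset_tsupport _ hne, Real.log_exp t⟩
  exact ⟨expTilt (-p) (φ ∘ Real.exp), contDiff_expTilt (hφ.comp Real.contDiff_exp),
    hasCompactSupport_expTilt hcomp, (eqOn_eulerPull_expTilt_comp_exp p φ).symm⟩

lemma contDiffOn_eulerPull (p : ℝ) {w : ℝ → ℂ} (hw : ContDiff ℝ ∞ w) :
    ContDiffOn ℝ ∞ (eulerPull p w) (Ioi 0) :=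
  (Complex.ofRealCLM.contDiff.comp_contDiffOn
    (contDiffOn_id.rpow_const_of_ne fun _ hr => (mem_Ioi.1 hr).ne')).mul
    (hw.comp_contDiffOn (Real.contDiffOn_log.mono fun _ hr => (mem_Ioi.1 hr).ne'))

lemma exists_eulerPull_eqOn (p : ℝ) {w : ℝ → ℂ} (hw : ContDiff ℝ ∞ w) (hc : HasCompactSupport w) :
    ∃ φ, ContDiff ℝ ∞ φ ∧ HasCompactSupport φ ∧ tsupport φ ⊆ Ioi 0 ∧
      EqOn φ (eulerPull p w) (Ioi 0) := by
  have hK : IsCompact (Real.exp '' tsupport w) := hc.isCompact.image Real.continuous_exp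
  have hpos : Real.exp '' tsupport w ⊆ Ioi 0 := image_subset_iff.2 fun t _ => Real.exp_pos t
  have hzero (r : ℝ) (hr : r ∉ Real.exp '' tsupport w) :
      (Ioi 0).indicator (eulerPull p w) r = 0 := by
    refine indicator_apply_eq_zero.2 fun hr0 => ?_
    have h : w (Real.log r) = 0 := image_eq_zero_of_notMem_tsupport fun h =>
      hr ⟨Real.log r, h, Real.exp_log hr0⟩
    rw [eulerPull, h, mul_zero]
  have hsupp : tsupport ((Ioi 0).indicator (eulerPull p w)) ⊆ Ioi 0 :=
    (closure_minimal (Function.support_subset_iff'.2 hzero) hK.isClosed).trans hpos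
  refine ⟨_, contMDiff_iff_contDiff.1 (contMDiff_of_tsupport fun r hr => ?_),
    HasCompactSupport.intro hK hzero, hsupp, eqOn_indicator⟩
  have hr := isOpen_Ioi.mem_nhds (hsupp hr)
  exact (((contDiffOn_eulerPull p hw).contDiffAt hr).congr_of_eventuallyEq
    (eqOn_indicator.eventuallyEq_of_mem hr)).contMDiffAt

/-- The generators of the graph of `opOnHalfLine (eulerExp b c)`. -/
def testPairs (b c : ℝ) : Set (Lp ℂ 2 lebIoi × Lp ℂ 2 lebIoi) :=
  {p | ∃ φ : ℝ → ℂ, ContDiff ℝ (⊤ : ℕ∞) φ ∧ HasCompactSupport φ ∧ tsupport φ ⊆ Ioi 0 ∧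
    (p.1 : ℝ → ℂ) =ᵐ[lebIoi] φ ∧ (p.2 : ℝ → ℂ) =ᵐ[lebIoi] eulerExp b c φ}

/-- A pair of elements of `L²((0, ∞))` is represented on the line by the pair `W`, `F`: the first
element is `r ^ (3 / 2) W (log r)` and the second is `r ^ (-5 / 2) F (log r)`. -/
def IsRepresentedBy (P : Lp ℂ 2 lebIoi × Lp ℂ 2 lebIoi) (W F : ℝ → ℂ) : Prop :=
  P.1 =ᵐ[lebIoi] eulerPull (3 / 2) W ∧ P.2 =ᵐ[lebIoi] eulerPull (-(5 / 2)) F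

lemma inner_fst_snd_eq_integral {P P' : Lp ℂ 2 lebIoi × Lp ℂ 2 lebIoi} {W F W' F' : ℝ → ℂ}
    (h : IsRepresentedBy P W F) (h' : IsRepresentedBy P' W' F') :
    inner ℂ P.1 P'.2 = ∫ t, star W t * F' t :=
  inner_eq_integral_of_ae_eq_eulerPull (by norm_num) h.1 h'.2

lemma inner_snd_fst_eq_integral {P P' : Lp ℂ 2 lebIoi × Lp ℂ 2 lebIoi} {W F W' F' : ℝ → ℂ}
    (h : IsRepresentedBy P W F) (h' : IsRepresentedBy P' W' F') :
    inner ℂ P.2 P'.1 = ∫ t, star F t * W' t :=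
  inner_eq_integral_of_ae_eq_eulerPull (by norm_num) h.2 h'.1

lemma exists_isRepresentedBy (P : Lp ℂ 2 lebIoi × Lp ℂ 2 lebIoi) :
    ∃ W F, Measurable W ∧ Measurable F ∧ MemLp (expTilt 2 W) 2 ∧ MemLp (expTilt (-2) F) 2 ∧
      IsRepresentedBy P W F := by
  obtain ⟨W, hW, hW₂, hPW⟩ := exists_ae_eq_eulerPull (3 / 2) P.1
  obtain ⟨F, hF, hF₂, hPF⟩ := exists_ae_eq_eulerPull (-(5 / 2)) P.2
  norm_num only at hW₂ hF₂
  exact ⟨W, F, hW, hF, hW₂, hF₂, hPW, hPF⟩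

lemma exists_represented (hW : Measurable W) (hF : Measurable F) (hW₂ : MemLp (expTilt 2 W) 2)
    (hF₂ : MemLp (expTilt (-2) F) 2) : ∃ P, IsRepresentedBy P W F := by
  have h₁ : MemLp (eulerPull (3 / 2) W) 2 lebIoi := by
    rw [memLp_eulerPull_iff hW]
    norm_num only
    exact hW₂
  have h₂ : MemLp (eulerPull (-(5 / 2)) F) 2 lebIoi := by
    rw [memLp_eulerPull_iff hF]
    norm_num only
    exact hF₂
  exact ⟨(h₁.toLp, h₂.toLp), h₁.coeFn_toLp, h₂.coeFn_toLp⟩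

lemma mem_testPairs_iff : P ∈ testPairs b c ↔ ∃ w, ContDiff ℝ ∞ w ∧ HasCompactSupport w ∧
    IsRepresentedBy P w (quarticOp (2 * b + 5 / 2) ((b - 3 / 4) ^ 2 + c) w) := by
  have htransfer {φ w : ℝ → ℂ} (hw : ContDiff ℝ ∞ w) (h : EqOn φ (eulerPull (3 / 2) w) (Ioi 0)) :
      eulerExp b c φ =ᵐ[lebIoi]
        eulerPull (-(5 / 2)) (quarticOp (2 * b + 5 / 2) ((b - 3 / 4) ^ 2 + c) w) :=
    ae_eq_lebIoi_of_eqOn ((eqOn_eulerExp h).trans (eqOn_eulerExp_eulerPull b c hw))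
  constructor
  · rintro ⟨φ, hφ, hc, hsupp, h₁, h₂⟩
    obtain ⟨w, hw, hwc, h⟩ := exists_eqOn_eulerPull (3 / 2) hφ hc hsupp
    exact ⟨w, hw, hwc, h₁.trans (ae_eq_lebIoi_of_eqOn h), h₂.trans (htransfer hw h)⟩
  · rintro ⟨w, hw, hwc, h₁, h₂⟩
    obtain ⟨φ, hφ, hc, hsupp, h⟩ := exists_eulerPull_eqOn (3 / 2) hw hwc
    exact ⟨φ, hφ, hc, hsupp, h₁.trans (ae_eq_lebIoi_of_eqOn h).symm,
      h₂.trans (htransfer hw h).symm⟩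

lemma exists_mem_testPairs (b c : ℝ) {w : ℝ → ℂ} (hw : ContDiff ℝ ∞ w) (hc : HasCompactSupport w) :
    ∃ P ∈ testPairs b c,
      IsRepresentedBy P w (quarticOp (2 * b + 5 / 2) ((b - 3 / 4) ^ 2 + c) w) := by
  have hop := continuous_quarticOp (a := 2 * b + 5 / 2) (K := (b - 3 / 4) ^ 2 + c) hw
  obtain ⟨P, hP⟩ := exists_represented hw.continuous.measurable hop.measurable
    ((continuous_expTilt hw.continuous).memLp_of_hasCompactSupport (hasCompactSupport_expTilt hc))
    ((continuous_expTilt hop).memLp_of_hasCompactSupport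
      (hasCompactSupport_expTilt (hasCompactSupport_quarticOp hc)))
  exact ⟨P, mem_testPairs_iff.2 ⟨w, hw, hc, hP⟩, hP⟩

lemma forall_testPairs_inner_eq_iff (hx : IsRepresentedBy x W F) :
    (∀ P ∈ testPairs b c, inner ℂ P.2 x.1 = inner ℂ P.1 x.2) ↔
      ∀ φ : ℝ → ℂ, ContDiff ℝ ∞ φ → HasCompactSupport φ →
        ∫ t, φ t * F t = ∫ t, quarticOp (2 * b + 5 / 2) ((b - 3 / 4) ^ 2 + c) φ t * W t := by
  constructor
  · intro h φ hφ hc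
    obtain ⟨P, hP, hrep⟩ := exists_mem_testPairs b c (w := star φ)
      (Complex.conjCLE.contDiff.comp hφ) (hc.comp_left (star_zero ℂ))
    have h := h P hP
    rw [inner_snd_fst_eq_integral hrep hx, inner_fst_snd_eq_integral hrep hx, quarticOp_star,
      star_star, star_star] at h
    exact h.symm
  · intro h P hP
    obtain ⟨w, hw, hc, hrep⟩ := mem_testPairs_iff.1 hP
    rw [inner_snd_fst_eq_integral hrep hx, inner_fst_snd_eq_integral hrep hx, ← quarticOp_star]
    exact (h (star w) (Complex.conjCLE.contDiff.comp hw) (hc.comp_left (star_zero ℂ))).symm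

lemma testPairs_symm : ∀ P ∈ testPairs b c, ∀ Q ∈ testPairs b c,
    inner ℂ P.2 Q.1 = inner ℂ P.1 Q.2 := by
  intro P hP Q hQ
  obtain ⟨w, hw, -, hrep⟩ := mem_testPairs_iff.1 hQ
  exact (forall_testPairs_inner_eq_iff hrep).2
    (fun φ hφ hc => (integral_quarticOp_mul_eq_of_hasCompactSupport hφ hc hw).symm) P hP

lemma testPairs_total (y : Lp ℂ 2 lebIoi) (hy : ∀ P ∈ testPairs b c, inner ℂ P.1 y = 0) :
    y = 0 := by
  obtain ⟨W, F, -, -, -, hF, hrep⟩ := exists_isRepresentedBy (y, y)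
  have hF0 : ∀ᵐ t, F t = 0 := by
    refine ae_eq_zero_of_integral_contDiff_smul_eq_zero (locallyIntegrable_of_memLp_expTilt hF)
      fun ρ hρ hc => ?_
    obtain ⟨P, hP, hPrep⟩ := exists_mem_testPairs b c (w := fun t => (ρ t : ℂ))
      (Complex.ofRealCLM.contDiff.comp hρ) (hc.comp_left Complex.ofReal_zero)
    rw [← hy P hP, inner_fst_snd_eq_integral hPrep hrep]
    simp only [Pi.star_apply, Complex.star_def, Complex.conj_ofReal, Complex.real_smul]
  rw [← inner_self_eq_zero (𝕜 := ℂ), inner_fst_snd_eq_integral hrep hrep]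
  refine integral_eq_zero_of_ae (hF0.mono fun t ht => ?_)
  simp only [ht, mul_zero, Pi.zero_apply]

theorem essentiallySelfAdjoint_iff_isWeakSol :
    EssentiallySelfAdjoint (opOnHalfLine (eulerExp b c)) ↔ ∀ W F W' F' : ℝ → ℂ,
      IsWeakSol (2 * b + 5 / 2) ((b - 3 / 4) ^ 2 + c) W F →
      IsWeakSol (2 * b + 5 / 2) ((b - 3 / 4) ^ 2 + c) W' F' →
        ∫ t, F t * W' t = ∫ t, W t * F' t := by
  refine (essentiallySelfAdjoint_span_iff (G := testPairs b c) testPairs_symm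
    testPairs_total).trans ⟨fun h W F W' F' hW hW' => ?_, fun h x y hx hy => ?_⟩
  · have hstar := hW.star
    obtain ⟨x, hx⟩ := exists_represented hstar.measurable_left hstar.measurable_right
      hstar.memLp_left hstar.memLp_right
    obtain ⟨y, hy⟩ := exists_represented hW'.measurable_left hW'.measurable_right
      hW'.memLp_left hW'.memLp_right
    have h := h x y ((forall_testPairs_inner_eq_iff hx).2 hstar.integral_mul_eq)
      ((forall_testPairs_inner_eq_iff hy).2 hW'.integral_mul_eq)
    rwa [inner_snd_fst_eq_integral hx hy, inner_fst_snd_eq_integral hx hy, star_star,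
      star_star] at h
  · obtain ⟨W, F, hWm, hFm, hW₂, hF₂, hxrep⟩ := exists_isRepresentedBy x
    obtain ⟨W', F', hWm', hFm', hW₂', hF₂', hyrep⟩ := exists_isRepresentedBy y
    rw [inner_snd_fst_eq_integral hxrep hyrep, inner_fst_snd_eq_integral hxrep hyrep]
    exact h _ _ _ _
      (IsWeakSol.mk hWm hFm hW₂ hF₂ ((forall_testPairs_inner_eq_iff hxrep).1 hx)).star
      (IsWeakSol.mk hWm' hFm' hW₂' hF₂' ((forall_testPairs_inner_eq_iff hyrep).1 hy))

end TestPairs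

section ExponentialPolynomials

open Polynomial

variable {a K : ℝ} {q : ℂ} {u v : ℝ → ℂ}

/-- The exponential polynomial `p(t) exp (q t)`, the general form of the solutions of
`quarticOp a K u = 0`. -/
def expPolynomial (q : ℂ) (p : ℂ[X]) (t : ℝ) : ℂ :=
  p.eval (t : ℂ) * Complex.exp (q * t)

lemma hasDerivAt_expPolynomial (q : ℂ) (p : ℂ[X]) (t : ℝ) :
    HasDerivAt (expPolynomial q p) (expPolynomial q (derivative p + C q * p) t) t := by
  refine ((p.hasDerivAt (t : ℂ)).comp_ofReal.mul (hasDerivAt_cexp_mul q t)).congr_deriv ?_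
  simp only [expPolynomial, eval_add, eval_mul, eval_C]
  ring

lemma deriv_expPolynomial (q : ℂ) (p : ℂ[X]) :
    deriv (expPolynomial q p) = expPolynomial q (derivative p + C q * p) :=
  funext fun t => (hasDerivAt_expPolynomial q p t).deriv

lemma contDiff_expPolynomial (q : ℂ) (p : ℂ[X]) : ContDiff ℝ ∞ (expPolynomial q p) := by
  have hp : ContDiff ℝ ∞ fun t : ℝ => p.eval (t : ℂ) :=
    ((p.contDiff_aeval ∞).restrict_scalars ℝ).comp Complex.ofRealCLM.contDiff
  exact hp.mul (contDiff_const.mul Complex.ofRealCLM.contDiff).cexp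

lemma isBigO_polynomial_exp_atBot (p : ℂ[X]) {δ : ℝ} (hδ : 0 < δ) :
    (fun t : ℝ => p.eval (t : ℂ)) =O[atBot] fun t => Real.exp (-δ * t) := by
  induction p using Polynomial.induction_on' with
  | add p₁ p₂ h₁ h₂ => simpa only [eval_add] using h₁.add h₂
  | monomial k z =>
    have hk := ((isLittleO_pow_exp_pos_mul_atTop (k := k) hδ).isBigO.comp_tendsto
      tendsto_neg_atBot_atTop).norm_left
    simp only [eval_monomial]
    refine (IsBigO.of_norm_left (hk.congr (fun t => ?_) fun t => ?_)).const_mul_left z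
    · simp
    · simp

lemma isBigO_expTilt_expPolynomial {α : ℝ} {q : ℂ} (hq : -α < q.re) (p : ℂ[X]) :
    expTilt α (expPolynomial q p) =O[atBot] fun t => Real.exp ((α + q.re) / 2 * t) := by
  have hp := isBigO_polynomial_exp_atBot p (δ := (α + q.re) / 2) (by linarith)
  have he := isBigO_refl (fun t => Real.exp ((α + q.re) * t)) atBot
  refine .of_norm_left ((hp.norm_left.mul he).congr (fun t => ?_) fun t => ?_)
  · rw [norm_expTilt, expPolynomial, norm_mul, norm_cexp_mul, add_mul, Real.exp_add]
    ring
  · rw [← Real.exp_add]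
    ring_nf

lemma quarticOp_expPolynomial (q : ℂ) (p : ℂ[X]) (t : ℝ) :
    quarticOp a K (expPolynomial q p) t = ((q ^ 4 - a * q ^ 2 + K) * p.eval (t : ℂ) +
      (4 * q ^ 3 - 2 * a * q) * (derivative p).eval (t : ℂ) +
      (6 * q ^ 2 - a) * (derivative (derivative p)).eval (t : ℂ) +
      4 * q * (derivative (derivative (derivative p))).eval (t : ℂ) +
      (derivative (derivative (derivative (derivative p)))).eval (t : ℂ)) *
        Complex.exp (q * t) := by
  simp only [quarticOp, iteratedDeriv_succ', iteratedDeriv_zero, deriv_expPolynomial,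
    derivative_add, derivative_C_mul]
  simp only [expPolynomial, eval_add, eval_mul, eval_C]
  ring

/-- The bracket is `P'(q)` for `exp (q t)` and `exp (-q t)`, where `P` is the characteristic
polynomial; it is `-P''(q) / 2` for `exp (q t)` and `t exp (-q t)`, which solve the equation when
`P'(q) = 0`; if also `P''(q) = 0`, then `P = X ^ 4`. -/
lemma exists_expPolynomial_lagrangeBracket_ne_zero (h₀ : q ^ 4 - a * q ^ 2 + K = 0) :
    ∃ p p' : ℂ[X], quarticOp a K (expPolynomial q p) = 0 ∧
      quarticOp a K (expPolynomial (-q) p') = 0 ∧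
      lagrangeBracket a (expPolynomial q p) (expPolynomial (-q) p') 0 ≠ 0 := by
  have h₀' : (-q) ^ 4 - a * (-q) ^ 2 + K = 0 := by linear_combination h₀
  by_cases h₁ : 4 * q ^ 3 - 2 * a * q = 0
  · have h₁' : 4 * (-q) ^ 3 - 2 * a * -q = 0 := by linear_combination -h₁
    by_cases h₂ : 6 * q ^ 2 - a = 0
    · have hq : q = 0 := pow_eq_zero_iff three_ne_zero |>.1 (by
        linear_combination -(1 / 8) * h₁ + q / 4 * h₂)
      have ha : (a : ℂ) = 0 := by linear_combination -h₂ + 6 * q * hq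
      have hK : (K : ℂ) = 0 := by linear_combination h₀ + (q * a - q ^ 3) * hq
      refine ⟨1, X ^ 3, ?_, ?_, ?_⟩
      · ext t; simp [quarticOp_expPolynomial, h₀]
      · ext t; simp [quarticOp_expPolynomial, hq, ha, hK]
      · norm_num [lagrangeBracket, iteratedDeriv_succ', deriv_expPolynomial, expPolynomial, hq, ha]
    · refine ⟨1, X, ?_, ?_, fun h => h₂ ?_⟩
      · ext t; simp [quarticOp_expPolynomial, h₀]
      · ext t; rw [quarticOp_expPolynomial, h₀', h₁']; simp
      · simp [lagrangeBracket, iteratedDeriv_succ', deriv_expPolynomial, expPolynomial] at h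
        linear_combination -h
  · refine ⟨1, 1, ?_, ?_, fun h => h₁ ?_⟩
    · ext t; simp [quarticOp_expPolynomial, h₀]
    · ext t; rw [quarticOp_expPolynomial, h₀']; simp
    · simp [lagrangeBracket, iteratedDeriv_succ', deriv_expPolynomial, expPolynomial] at h
      linear_combination h

end ExponentialPolynomials

section Cutoff

variable {a K : ℝ} {u v : ℝ → ℂ}

/-- A smooth function equal to `1` on `(-∞, 1]` and to `0` on `[2, ∞)`. -/
def cutoff (t : ℝ) : ℂ :=
  (Real.smoothTransition (2 - t) : ℝ)

lemma contDiff_cutoff_mul (hu : ContDiff ℝ ∞ u) : ContDiff ℝ ∞ (cutoff * u) :=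
  (Complex.ofRealCLM.contDiff.comp
    (Real.smoothTransition.contDiff.comp (contDiff_const.sub contDiff_id))).mul hu

lemma cutoff_mul_eventuallyEq {t : ℝ} (ht : t < 1) : cutoff * u =ᶠ[𝓝 t] u := by
  filter_upwards [Iio_mem_nhds ht] with s hs
  have hs' : 1 ≤ 2 - s := by linarith [show s < 1 from hs]
  simp [cutoff, Real.smoothTransition.one_of_one_le hs']

lemma cutoff_mul_eventuallyEq_zero {t : ℝ} (ht : 2 < t) : cutoff * u =ᶠ[𝓝 t] 0 := by
  filter_upwards [Ioi_mem_nhds ht] with s hs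
  simp [cutoff, Real.smoothTransition.zero_of_nonpos (sub_neg.2 hs).le]

lemma quarticOp_congr {t : ℝ} (h : u =ᶠ[𝓝 t] v) : quarticOp a K u t = quarticOp a K v t := by
  simp only [quarticOp, h.iteratedDeriv_eq, h.eq_of_nhds]

lemma quarticOp_cutoff_mul_eq_zero (hu : quarticOp a K u = 0) {t : ℝ}
    (ht : t ∉ Icc (0 : ℝ) 3) : quarticOp a K (cutoff * u) t = 0 := by
  rcases not_and_or.1 ht with ht | ht
  · rw [quarticOp_congr (cutoff_mul_eventuallyEq (by linarith)), hu, Pi.zero_apply]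
  · rw [quarticOp_congr (cutoff_mul_eventuallyEq_zero (by linarith))]
    simp [quarticOp]

lemma hasCompactSupport_quarticOp_cutoff_mul (hu : quarticOp a K u = 0) :
    HasCompactSupport (quarticOp a K (cutoff * u)) :=
  .intro isCompact_Icc fun _ ht => quarticOp_cutoff_mul_eq_zero hu ht

lemma lagrangeBracket_congr {u' v' : ℝ → ℂ} {t : ℝ} (hu : u =ᶠ[𝓝 t] u') (hv : v =ᶠ[𝓝 t] v') :
    lagrangeBracket a u v t = lagrangeBracket a u' v' t := by
  simp only [lagrangeBracket, hu.iteratedDeriv_eq, hv.iteratedDeriv_eq, hu.deriv_eq, hv.deriv_eq,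
    hu.eq_of_nhds, hv.eq_of_nhds]

lemma integral_quarticOp_cutoff_mul (hu : ContDiff ℝ ∞ u) (hv : ContDiff ℝ ∞ v)
    (hu₀ : quarticOp a K u = 0) (hv₀ : quarticOp a K v = 0) :
    (∫ t, quarticOp a K (cutoff * u) t * (cutoff * v) t) -
      ∫ t, (cutoff * u) t * quarticOp a K (cutoff * v) t = -lagrangeBracket a u v 0 := by
  have cu := contDiff_cutoff_mul hu
  have cv := contDiff_cutoff_mul hv
  have iu : Integrable fun t => quarticOp a K (cutoff * u) t * (cutoff * v) t :=
    ((continuous_quarticOp cu).mul cv.continuous).integrable_of_hasCompactSupport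
      (hasCompactSupport_quarticOp_cutoff_mul hu₀).mul_right
  have iv : Integrable fun t => (cutoff * u) t * quarticOp a K (cutoff * v) t :=
    (cu.continuous.mul (continuous_quarticOp cv)).integrable_of_hasCompactSupport
      (hasCompactSupport_quarticOp_cutoff_mul hv₀).mul_left
  have h₀ : lagrangeBracket a (cutoff * u) (cutoff * v) 0 = lagrangeBracket a u v 0 :=
    lagrangeBracket_congr (cutoff_mul_eventuallyEq one_pos) (cutoff_mul_eventuallyEq one_pos)
  have h₃ : lagrangeBracket a (cutoff * u) (cutoff * v) 3 = 0 :=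
    (lagrangeBracket_congr (cutoff_mul_eventuallyEq_zero (by norm_num))
      (cutoff_mul_eventuallyEq_zero (by norm_num))).trans (by simp [lagrangeBracket])
  calc
    _ = ∫ t in (0 : ℝ)..3, quarticOp a K (cutoff * u) t * (cutoff * v) t -
        (cutoff * u) t * quarticOp a K (cutoff * v) t := by
      rw [← integral_sub iu iv, intervalIntegral.integral_of_le (by norm_num),
        ← integral_Icc_eq_integral_Ioc, setIntegral_eq_integral_of_forall_compl_eq_zero]
      intro t ht
      rw [quarticOp_cutoff_mul_eq_zero hu₀ ht, quarticOp_cutoff_mul_eq_zero hv₀ ht]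
      simp
    _ = _ := by
      rw [intervalIntegral.integral_eq_sub_of_hasDerivAt
        (fun t _ => hasDerivAt_lagrangeBracket cu cv t) (iu.sub iv).intervalIntegrable, h₀, h₃,
        zero_sub]

lemma memLp_expTilt_cutoff_mul {α δ : ℝ} (hu : ContDiff ℝ ∞ u) (hδ : 0 < δ)
    (hO : expTilt α u =O[atBot] fun t => Real.exp (δ * t)) : MemLp (expTilt α (cutoff * u)) 2 := by
  have hc : Continuous (expTilt α (cutoff * u)) :=
    continuous_expTilt (contDiff_cutoff_mul hu).continuous
  rw [memLp_two_iff_integrable_sq_norm hc.aestronglyMeasurable]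
  refine (hc.norm.pow 2).locallyIntegrable.integrable_of_isBigO_atBot_atTop
    (g := fun t => Real.exp (2 * δ * t)) (g' := fun _ => (0 : ℝ)) ?_
    ⟨Iic 0, Iic_mem_atBot 0, integrableOn_exp_mul_Iic (by linarith) 0⟩ (EventuallyEq.isBigO ?_)
    ⟨univ, univ_mem, integrableOn_zero⟩
  · refine (hO.norm_left.pow 2).congr' ?_ (.of_forall fun t => ?_)
    · filter_upwards [eventually_lt_atBot 1] with t ht
      rw [norm_expTilt, norm_expTilt, (cutoff_mul_eventuallyEq ht).eq_of_nhds]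
    · simp only
      rw [← Real.exp_nat_mul, Nat.cast_ofNat, mul_assoc]
  · filter_upwards [eventually_gt_atTop 2] with t ht
    simp [norm_expTilt, (cutoff_mul_eventuallyEq_zero ht).eq_of_nhds]

lemma isWeakSol_cutoff_mul {δ : ℝ} (hu : ContDiff ℝ ∞ u) (hu₀ : quarticOp a K u = 0) (hδ : 0 < δ)
    (hO : expTilt 2 u =O[atBot] fun t => Real.exp (δ * t)) :
    IsWeakSol a K (cutoff * u) (quarticOp a K (cutoff * u)) := by
  have hcu := contDiff_cutoff_mul hu
  exact isWeakSol_of_contDiff hcu (memLp_expTilt_cutoff_mul hu hδ hO)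
    ((continuous_expTilt (continuous_quarticOp hcu)).memLp_of_hasCompactSupport
      (hasCompactSupport_expTilt (hasCompactSupport_quarticOp_cutoff_mul hu₀)))

lemma exists_isWeakSol_integral_ne {q : ℂ} (hq : |q.re| < 2) (h₀ : q ^ 4 - a * q ^ 2 + K = 0) :
    ∃ W F W' F', IsWeakSol a K W F ∧ IsWeakSol a K W' F' ∧
      ∫ t, F t * W' t ≠ ∫ t, W t * F' t := by
  obtain ⟨p, p', hp, hp', hne⟩ := exists_expPolynomial_lagrangeBracket_ne_zero h₀
  have hu := contDiff_expPolynomial q p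
  have hv := contDiff_expPolynomial (-q) p'
  obtain ⟨h₁, h₂⟩ := abs_lt.1 hq
  have h₂' : -2 < (-q).re := by simpa using h₂
  have wu := isWeakSol_cutoff_mul hu hp (by linarith) (isBigO_expTilt_expPolynomial h₁ p)
  have wv := isWeakSol_cutoff_mul hv hp' (by linarith) (isBigO_expTilt_expPolynomial h₂' p')
  refine ⟨_, _, _, _, wu, wv, fun h => hne ?_⟩
  rw [← neg_eq_zero, ← integral_quarticOp_cutoff_mul hu hv hp hp', h, sub_self]

end Cutoff

section Threshold

lemma two_le_abs_re_iff (q : ℂ) : 2 ≤ |q.re| ↔ 8 ≤ ‖q ^ 2‖ + (q ^ 2).re := by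
  have h : ‖q ^ 2‖ + (q ^ 2).re = 2 * q.re ^ 2 := by
    rw [norm_pow, Complex.sq_norm, Complex.normSq_apply, pow_two q, Complex.mul_re]
    ring
  rw [h, ← sq_le_sq₀ zero_le_two (abs_nonneg _), sq_abs]
  constructor <;> intro h <;> linarith

lemma forall_quartic_root_iff (a K : ℂ) :
    (∀ q : ℂ, q ^ 4 - a * q ^ 2 + K = 0 → 2 ≤ |q.re|) ↔
      ∀ z : ℂ, z ^ 2 - a * z + K = 0 → 8 ≤ ‖z‖ + z.re := by
  simp only [two_le_abs_re_iff]
  refine ⟨fun h z hz => ?_, fun h q hq => h _ (by rw [← hq]; ring)⟩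
  obtain ⟨q, rfl⟩ := IsAlgClosed.exists_pow_nat_eq z two_pos
  exact h q (by rw [← hz]; ring)

lemma sq_sub_mul_add_eq_zero_iff {a K d z : ℂ} (hd : d ^ 2 = a ^ 2 / 4 - K) :
    z ^ 2 - a * z + K = 0 ↔ z = a / 2 + d ∨ z = a / 2 - d := by
  have h : z ^ 2 - a * z + K = (z - (a / 2 + d)) * (z - (a / 2 - d)) := by linear_combination hd
  rw [h, mul_eq_zero, sub_eq_zero, sub_eq_zero]

lemma eight_le_norm_add_self_iff (x : ℝ) : 8 ≤ ‖x‖ + x ↔ 4 ≤ x := by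
  rw [Real.norm_eq_abs]
  rcases abs_cases x with h | h <;> constructor <;> intro h <;> linarith

lemma forall_quadratic_root_iff_of_nonneg {a K : ℝ} (h : 0 ≤ a ^ 2 / 4 - K) :
    (∀ z : ℂ, z ^ 2 - a * z + K = 0 → 8 ≤ ‖z‖ + z.re) ↔ √(a ^ 2 / 4 - K) ≤ a / 2 - 4 := by
  have hd : ((√(a ^ 2 / 4 - K) : ℝ) : ℂ) ^ 2 = (a : ℂ) ^ 2 / 4 - K := by
    exact_mod_cast Real.sq_sqrt h
  simp only [sq_sub_mul_add_eq_zero_iff hd, forall_eq_or_imp, forall_eq]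
  norm_cast
  rw [eight_le_norm_add_self_iff, eight_le_norm_add_self_iff]
  constructor
  · rintro ⟨-, h⟩; linarith
  · intro h'; constructor <;> linarith [Real.sqrt_nonneg (a ^ 2 / 4 - K)]

lemma forall_quadratic_root_iff_of_nonpos {a K : ℝ} (h : a ^ 2 / 4 - K ≤ 0) :
    (∀ z : ℂ, z ^ 2 - a * z + K = 0 → 8 ≤ ‖z‖ + z.re) ↔ 8 - a / 2 ≤ √K := by
  have hd : (√(K - a ^ 2 / 4) * Complex.I) ^ 2 = (a : ℂ) ^ 2 / 4 - K := by
    rw [mul_pow, Complex.I_sq, ← Complex.ofReal_pow, Real.sq_sqrt (by linarith)]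
    push_cast
    ring
  have hnorm (y : ℝ) (hy : y ^ 2 = K - a ^ 2 / 4) : ‖((a / 2 : ℝ) + y * Complex.I : ℂ)‖ = √K := by
    rw [Complex.norm_add_mul_I, hy]
    ring_nf
  have h₁ := hnorm _ (Real.sq_sqrt (by linarith))
  have h₂ := hnorm (-√(K - a ^ 2 / 4)) (by rw [neg_sq, Real.sq_sqrt (by linarith)])
  simp only [sq_sub_mul_add_eq_zero_iff hd, forall_eq_or_imp, forall_eq]
  push_cast at h₁ h₂
  rw [neg_mul, ← sub_eq_add_neg] at h₂
  rw [h₁, h₂]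
  simp [add_comm]

/-- The threshold for `c` in the essential self-adjointness of `eulerExp b c`. The two branches
are the two ways in which a root of the characteristic polynomial first reaches `|re q| = 2`: as
one of a complex quadruple, or as a real root. -/
def eulerGamma (b : ℝ) : ℝ :=
  if b ≤ 11 / 4 then 45 - 12 * b else -((4 * b - 3) * (4 * b - 35)) / 16

lemma forall_root_two_le_abs_re_iff (b c : ℝ) :
    (∀ q : ℂ, q ^ 4 - (2 * b + 5 / 2 : ℝ) * q ^ 2 + ((b - 3 / 4) ^ 2 + c : ℝ) = 0 → 2 ≤ |q.re|) ↔
      eulerGamma b ≤ c := by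
  have hdisc : (2 * b + 5 / 2) ^ 2 / 4 - ((b - 3 / 4) ^ 2 + c) = 4 * b + 1 - c := by ring
  rw [forall_quartic_root_iff, eulerGamma]
  rcases le_total c (4 * b + 1) with h | h
  · rw [forall_quadratic_root_iff_of_nonneg (by linarith), hdisc, Real.sqrt_le_iff]
    split_ifs with hb
    · constructor
      · rintro ⟨h₁, h₂⟩; nlinarith
      · intro h₁; constructor <;> nlinarith
    · constructor
      · rintro ⟨-, h₂⟩; linarith
      · intro h₁; constructor <;> linarith
  · rw [forall_quadratic_root_iff_of_nonpos (by linarith)]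
    split_ifs with hb
    · rw [Real.le_sqrt' (by linarith)]
      constructor <;> intro h₁ <;> linarith
    · refine iff_of_true ?_ (by nlinarith)
      exact Real.le_sqrt_of_sq_le (by linarith)

end Threshold

lemma tau2nlExp_eq_eulerExp (n ℓ : ℕ) (c : ℝ) :
    tau2nlExp n ℓ c = eulerExp (((n : ℝ) + 2 * ℓ - 1) * (n + 2 * ℓ - 3) / 4) c := by
  have h : bExp n ℓ = besselExp (((n : ℝ) + 2 * ℓ - 1) * (n + 2 * ℓ - 3) / 4) := by
    ext φ r
    rw [bExp, besselExp, div_div]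
  ext φ r
  rw [tau2nlExp, eulerExp, h]

lemma gamma2_eq_eulerGamma (n ℓ : ℕ) :
    gamma2 n ℓ = eulerGamma (((n : ℝ) + 2 * ℓ - 1) * (n + 2 * ℓ - 3) / 4) := by
  rw [gamma2, eulerGamma]
  simp only [div_le_div_iff_of_pos_right (four_pos (α := ℝ))]
  split_ifs <;> ring

end EulerOperator

open EulerOperator in
theorem stmt9_general (b c : ℝ) :
    EssentiallySelfAdjoint (opOnHalfLine (eulerExp b c)) ↔ eulerGamma b ≤ c := by
  rw [essentiallySelfAdjoint_iff_isWeakSol, ← forall_root_two_le_abs_re_iff]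
  refine ⟨fun h q h₀ => ?_, fun h W F W' F' hW hW' => hW.integral_eq h hW'⟩
  by_contra! hq
  obtain ⟨W, F, W', F', hW, hW', hne⟩ := exists_isWeakSol_integral_ne hq h₀
  exact hne (h W F W' F' hW hW')

theorem stmt9 (n : ℕ) (hn : 2 ≤ n) (ℓ : ℕ) (c : ℝ) :
    EssentiallySelfAdjoint (tau2nlOp n ℓ c) ↔ gamma2 n ℓ ≤ c := by
  rw [tau2nlOp, EulerOperator.tau2nlExp_eq_eulerExp, EulerOperator.gamma2_eq_eulerGamma]
  exact stmt9_general _ c
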